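/- For every n ≥ 2 and m ≥ 0, the dimensions over k satisfy dim_k R^{Λ₁}_{B_n}(m) = dim_k R^{Λ₁}_{D_{n+1}}(m) = dim_k R^{Λ₂}_{D_{n+1}}(m) = Σ_λ |ST(λ)|², where the sum runs over all strict partitions λ of m with all parts at most n and ST(λ) denotes the set of standard tableaux of shifted shape λ. -/

import Mathlib

open scoped Classical

namespace QHA

variable (k : Type) [Field k]

/-- Generators of the quiver Hecke algebra `R(β)` on `m` strands with vertex set
`Fin n`: the idempotents `e(ν)`, the polynomial generators `x_p` and the
intertwiners `τ_j` (acting on strands `j`, `j+1`, 0-based). -/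
inductive Gen (n m : ℕ) : Type
  | e (ν : Fin m → Fin n) : Gen n m
  | x (p : Fin m) : Gen n m
  | t (j : ℕ) (h : j + 1 < m) : Gen n m

/-- The free algebra on the generators. -/
abbrev FA (n m : ℕ) := FreeAlgebra k (Gen n m)

variable {n m : ℕ}

noncomputable def Eg (ν : Fin m → Fin n) : FA k n m := FreeAlgebra.ι k (Gen.e ν)
noncomputable def Xg (p : Fin m) : FA k n m := FreeAlgebra.ι k (Gen.x p)
noncomputable def Tg (j : ℕ) (h : j + 1 < m) : FA k n m := FreeAlgebra.ι k (Gen.t j h)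

/-- The transposition of the strands `j`, `j+1` (0-based). -/
def posSwap (j : ℕ) (h : j + 1 < m) : Equiv.Perm (Fin m) :=
  Equiv.swap ⟨j, Nat.lt_of_succ_lt h⟩ ⟨j + 1, h⟩

/-- The place-permutation `s_j ν` of a sequence `ν`. -/
def swapSeq (j : ℕ) (h : j + 1 < m) (ν : Fin m → Fin n) : Fin m → Fin n :=
  ν ∘ posSwap j h

/-- Evaluation of a two-variable polynomial `p(u,v)` at two elements of a
(possibly noncommutative) `k`-algebra, as `Σ t_{p,q} a^p b^q`. -/
noncomputable def eval2 {A : Type} [Ring A] [Algebra k A]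
    (p : MvPolynomial (Fin 2) k) (a b : A) : A :=
  ∑ d ∈ p.support, algebraMap k A (MvPolynomial.coeff d p) * (a ^ d 0 * b ^ d 1)

/-- Evaluation of a three-variable polynomial. -/
noncomputable def eval3 {A : Type} [Ring A] [Algebra k A]
    (p : MvPolynomial (Fin 3) k) (a b c : A) : A :=
  ∑ d ∈ p.support, algebraMap k A (MvPolynomial.coeff d p) * (a ^ d 0 * b ^ d 1 * c ^ d 2)

/-- For `p = Q(u,v)`, the polynomial `(Q(u,v) - Q(w,v))/(u - w)` in the three
variables `u = X 0`, `v = X 1`, `w = X 2` (exact division by the monic `u - w`). -/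
noncomputable def Qbar (p : MvPolynomial (Fin 2) k) : MvPolynomial (Fin 3) k :=
  (MvPolynomial.finSuccEquiv k 2).symm
    (Polynomial.divByMonic
      ((MvPolynomial.finSuccEquiv k 2)
        (MvPolynomial.rename (fun i : Fin 2 => if i = 0 then (0 : Fin 3) else 1) p -
          MvPolynomial.rename (fun i : Fin 2 => if i = 0 then (2 : Fin 3) else 1) p))
      (Polynomial.X - Polynomial.C (MvPolynomial.X 1)))

/-- Admissibility of the family `Q_{i,j}(u,v)` of polynomials with respect to the
(symmetrizable) Cartan matrix `A` and symmetrizing integers `d`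
(so `(α_i, α_j) = d_i A_{i j}`):
`Q_{i,i} = 0`; `Q_{j,i}(u,v) = Q_{i,j}(v,u)`; `Q_{i,j} = 1` whenever `(α_i,α_j) = 0`
(`i ≠ j`); `Q_{i,j}` is supported on `(p,q)` with
`(α_i,α_i) p + (α_j,α_j) q = -2(α_i,α_j)`; and `t_{i,j;-a_{ij},0} ≠ 0`. -/
def QAdmissible (A : Fin n → Fin n → ℤ) (d : Fin n → ℤ)
    (Q : Fin n → Fin n → MvPolynomial (Fin 2) k) : Prop :=
  (∀ i, Q i i = 0) ∧
  (∀ i j, Q j i = MvPolynomial.rename (Equiv.swap (0 : Fin 2) 1) (Q i j)) ∧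
  (∀ i j, i ≠ j → d i * A i j = 0 → Q i j = 1) ∧
  (∀ i j, i ≠ j → ∀ dd ∈ (Q i j).support,
    (2 * d i) * (dd 0 : ℤ) + (2 * d j) * (dd 1 : ℤ) = -2 * (d i * A i j)) ∧
  (∀ i j, i ≠ j →
    MvPolynomial.coeff (Finsupp.single (0 : Fin 2) (-(A i j)).toNat) (Q i j) ≠ 0)

/-- The defining relations of the quiver Hecke algebra `R(β)`, where
`S ⊆ I^m` is the set of admissible sequences (`I^β`; `e(ν) = 0` for `ν ∉ S`). -/
inductive Rel (Q : Fin n → Fin n → MvPolynomial (Fin 2) k) (S : Set (Fin m → Fin n)) :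
    FA k n m → FA k n m → Prop
  | e_orth (ν ν' : Fin m → Fin n) (hne : ν ≠ ν') : Rel Q S (Eg k ν * Eg k ν') 0
  | e_idem (ν : Fin m → Fin n) : Rel Q S (Eg k ν * Eg k ν) (Eg k ν)
  | e_sum : Rel Q S (∑ ν : Fin m → Fin n, Eg k ν) 1
  | e_out (ν : Fin m → Fin n) (hν : ν ∉ S) : Rel Q S (Eg k ν) 0
  | xx (p q : Fin m) : Rel Q S (Xg k p * Xg k q) (Xg k q * Xg k p)
  | xe (p : Fin m) (ν : Fin m → Fin n) : Rel Q S (Xg k p * Eg k ν) (Eg k ν * Xg k p)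
  | te (j : ℕ) (h : j + 1 < m) (ν : Fin m → Fin n) :
      Rel Q S (Tg k j h * Eg k ν) (Eg k (swapSeq j h ν) * Tg k j h)
  | tt (a : ℕ) (ha : a + 1 < m) (b : ℕ) (hb : b + 1 < m) (hab : a + 1 < b ∨ b + 1 < a) :
      Rel Q S (Tg k a ha * Tg k b hb) (Tg k b hb * Tg k a ha)
  | tsq (j : ℕ) (h : j + 1 < m) (ν : Fin m → Fin n) :
      Rel Q S (Tg k j h * Tg k j h * Eg k ν)
        (eval2 k (Q (ν ⟨j, Nat.lt_of_succ_lt h⟩) (ν ⟨j + 1, h⟩))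
          (Xg k ⟨j, Nat.lt_of_succ_lt h⟩) (Xg k ⟨j + 1, h⟩) * Eg k ν)
  | tx_left (j : ℕ) (h : j + 1 < m) (ν : Fin m → Fin n)
      (hv : ν ⟨j, Nat.lt_of_succ_lt h⟩ = ν ⟨j + 1, h⟩) :
      Rel Q S (Tg k j h * Xg k ⟨j, Nat.lt_of_succ_lt h⟩ * Eg k ν)
        (Xg k ⟨j + 1, h⟩ * Tg k j h * Eg k ν - Eg k ν)
  | tx_right (j : ℕ) (h : j + 1 < m) (ν : Fin m → Fin n)
      (hv : ν ⟨j, Nat.lt_of_succ_lt h⟩ = ν ⟨j + 1, h⟩) :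
      Rel Q S (Tg k j h * Xg k ⟨j + 1, h⟩ * Eg k ν)
        (Xg k ⟨j, Nat.lt_of_succ_lt h⟩ * Tg k j h * Eg k ν + Eg k ν)
  | tx_comm (j : ℕ) (h : j + 1 < m) (ν : Fin m → Fin n) (p : Fin m)
      (hcase : ν ⟨j, Nat.lt_of_succ_lt h⟩ ≠ ν ⟨j + 1, h⟩ ∨ ((p : ℕ) ≠ j ∧ (p : ℕ) ≠ j + 1)) :
      Rel Q S (Tg k j h * Xg k p * Eg k ν) (Xg k (posSwap j h p) * Tg k j h * Eg k ν)
  | braid_ne (j : ℕ) (h1 : j + 1 < m) (h2 : j + 2 < m) (ν : Fin m → Fin n)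
      (hv : ν ⟨j, by omega⟩ ≠ ν ⟨j + 2, h2⟩) :
      Rel Q S
        (Tg k (j + 1) (by omega) * Tg k j h1 * Tg k (j + 1) (by omega) * Eg k ν)
        (Tg k j h1 * Tg k (j + 1) (by omega) * Tg k j h1 * Eg k ν)
  | braid_eq (j : ℕ) (h1 : j + 1 < m) (h2 : j + 2 < m) (ν : Fin m → Fin n)
      (hv : ν ⟨j, by omega⟩ = ν ⟨j + 2, h2⟩) :
      Rel Q S
        (Tg k (j + 1) (by omega) * Tg k j h1 * Tg k (j + 1) (by omega) * Eg k ν)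
        (Tg k j h1 * Tg k (j + 1) (by omega) * Tg k j h1 * Eg k ν +
          eval3 k (Qbar k (Q (ν ⟨j, by omega⟩) (ν ⟨j + 1, h1⟩)))
            (Xg k ⟨j, by omega⟩) (Xg k ⟨j + 1, h1⟩) (Xg k ⟨j + 2, h2⟩) * Eg k ν)

/-- The extra cyclotomic relations `x_m^{⟨h_{ν_m}, Λ⟩} e(ν) = 0` (`ν ∈ I^β`),
where `Λ` is written in fundamental-weight coordinates, so `⟨h_i, Λ⟩ = Λ i`. -/
inductive CycRel (Λ : Fin n → ℤ) (S : Set (Fin m → Fin n)) :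
    FA k n m → FA k n m → Prop
  | cyc (ν : Fin m → Fin n) (hν : ν ∈ S) (p : Fin m) (hp : (p : ℕ) + 1 = m) :
      CycRel Λ S (Xg k p ^ (Λ (ν p)).toNat * Eg k ν) 0

/-- Relations of the cyclotomic quiver Hecke algebra `R^Λ(β)`. -/
def CRel (Q : Fin n → Fin n → MvPolynomial (Fin 2) k) (S : Set (Fin m → Fin n))
    (Λ : Fin n → ℤ) : FA k n m → FA k n m → Prop :=
  fun a b => Rel k Q S a b ∨ CycRel k Λ S a b

/-- The `j`-th column of the Cartan matrix: the simple root `α_j` written in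
fundamental-weight coordinates (`⟨h_i, α_j⟩ = A i j`). -/
def αcol (A : Fin n → Fin n → ℤ) (j : Fin n) : Fin n → ℤ := fun i => A i j

/-- `FPath A Λ [i₁, …, i_ℓ] ξ` means `f̃_{i₁} ⋯ f̃_{i_ℓ} Λ = ξ` in the
minuscule crystal realized on the Weyl orbit of `Λ`:
`f̃_j μ = μ - α_j` whenever `⟨h_j, μ⟩ = 1` (and is undefined otherwise). -/
inductive FPath (A : Fin n → Fin n → ℤ) (Λ : Fin n → ℤ) :
    List (Fin n) → (Fin n → ℤ) → Prop
  | nil : FPath A Λ [] Λ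
  | cons (j : Fin n) (l : List (Fin n)) (ξ : Fin n → ℤ) :
      FPath A Λ l ξ → ξ j = 1 → FPath A Λ (j :: l) (ξ - αcol A j)

/-- The simple reflection `s_j μ = μ - ⟨h_j, μ⟩ α_j` on the weight lattice. -/
def sRef (A : Fin n → Fin n → ℤ) (j : Fin n) (μ : Fin n → ℤ) : Fin n → ℤ :=
  fun i => μ i - μ j * A i j

/-- The Weyl group orbit of `Λ` (the Weyl group being generated by the
involutions `s_j`, its orbit consists of images under words in the `s_j`). -/
def orbitW (A : Fin n → Fin n → ℤ) (Λ : Fin n → ℤ) : Set (Fin n → ℤ) :=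
  {ξ | ∃ l : List (Fin n), l.foldr (sRef A) Λ = ξ}

end QHA

namespace QHA

/-- The Cartan matrix of type `Bₙ` (0-based labeling; the first node carries the
short simple root). -/
def AB (n : ℕ) : Fin n → Fin n → ℤ := fun i j =>
  if i = j then 2
  else if (i : ℕ) = 0 ∧ (j : ℕ) = 1 then -2
  else if (i : ℕ) + 1 = (j : ℕ) ∨ (j : ℕ) + 1 = (i : ℕ) then -1
  else 0

/-- The symmetrizing integers of type `Bₙ`. -/
def dB (n : ℕ) : Fin n → ℤ := fun i => if (i : ℕ) = 0 then 1 else 2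

/-- The Cartan matrix of type `D_n` (0-based labeling: the nodes `0` and `1` are
the two end nodes, both joined to the node `2`, and `2 — 3 — ⋯ — (n-1)` is a chain). -/
def AD (n : ℕ) : Fin n → Fin n → ℤ := fun i j =>
  if i = j then 2
  else if ((i : ℕ) = 0 ∧ (j : ℕ) = 2) ∨ ((i : ℕ) = 2 ∧ (j : ℕ) = 0) then -1
  else if ((i : ℕ) = 1 ∧ (j : ℕ) = 2) ∨ ((i : ℕ) = 2 ∧ (j : ℕ) = 1) then -1
  else if (2 ≤ (i : ℕ) ∧ 2 ≤ (j : ℕ)) ∧ ((i : ℕ) + 1 = (j : ℕ) ∨ (j : ℕ) + 1 = (i : ℕ))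
    then -1
  else 0

/-- The shifted Young diagram of a strict partition `l = (λ₁ > λ₂ > ⋯)`. -/
def diagram (l : List ℕ) : Set (ℕ × ℕ) :=
  {b | b.1 - 1 < l.length ∧ 1 ≤ b.1 ∧ b.1 ≤ b.2 ∧ b.2 + 1 ≤ l.getD (b.1 - 1) 0 + b.1}

/-- `f : Fin N → ℕ × ℕ` is a standard tableau of shifted shape `l`. -/
def IsSYT (l : List ℕ) (N : ℕ) (f : Fin N → ℕ × ℕ) : Prop :=
  Function.Injective f ∧ Set.range f = diagram l ∧
    (∀ a b : Fin N, (f a).1 = (f b).1 → (f a).2 < (f b).2 → a < b) ∧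
    (∀ a b : Fin N, (f a).2 = (f b).2 → (f a).1 < (f b).1 → a < b)

/-- Pairs `(T, S)` of standard tableaux of a common shifted shape `λ ⊢ m` with all
parts at most `n`; the number of such pairs is `Σ_{λ ⊢ m, λ₁ ≤ n} |ST(λ)|²`. -/
def TabPairs (n m : ℕ) : Type :=
  {p : (Fin m → ℕ × ℕ) × (Fin m → ℕ × ℕ) //
    ∃ l : List ℕ, l.Chain' (· > ·) ∧ (∀ x ∈ l, 0 < x ∧ x ≤ n) ∧ l.sum = m ∧
      IsSYT l m p.1 ∧ IsSYT l m p.2}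

/-! ### Combinatorics of shifted tableaux -/

/-- Residue words of shifted standard tableaux (latest letter first). -/
def BPath (n : ℕ) : List ℕ → Prop
  | [] => True
  | c :: w => BPath n w ∧ c < n ∧ w.count c = w.count (c + 1) ∧
      (c = 0 ∨ w.count (c - 1) = w.count c + 1)

lemma BPath.inv {n : ℕ} {w : List ℕ} (h : BPath n w) :
    (∀ c, w.count (c + 1) ≤ w.count c ∧ w.count c ≤ w.count (c + 1) + 1) ∧
      ∀ c, n ≤ c → w.count c = 0 := by
  induction w with
  | nil => simp
  | cons a w ih =>
    obtain ⟨h1, h2, h3, h4⟩ := h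
    obtain ⟨ih1, ih2⟩ := ih h1
    refine ⟨fun c => ?_, fun c hc => ?_⟩
    · have := ih1 c
      simp only [List.count_cons, beq_iff_eq]
      by_cases e1 : a = c
      · subst e1; simp; omega
      · by_cases e2 : a = c + 1
        · subst e2; simp at h4 ⊢; omega
        · simp [e1, e2]; omega
    · have := ih2 c hc
      simp only [List.count_cons, beq_iff_eq]
      have : a ≠ c := by omega
      simp [*]

lemma BPath.anti {n : ℕ} {w : List ℕ} (h : BPath n w) (c t : ℕ) :
    w.count (c + t) ≤ w.count c ∧ w.count c ≤ w.count (c + t) + t := by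
  induction t with
  | zero => simp
  | succ t ih => have := h.inv.1 (c + t); rw [← add_assoc]; omega

lemma BPath.suffix {n : ℕ} {w : List ℕ} (u : List ℕ) (h : BPath n (u ++ w)) : BPath n w := by
  induction u with
  | nil => exact h
  | cons a u ih => exact ih h.1

/-- The box added by the head letter. -/
def boxOf : List ℕ → ℕ × ℕ
  | [] => (0, 0)
  | c :: w => (w.count c + 1, w.count c + 1 + c)

/-- The tableau of a word. -/
def tabOf (m : ℕ) (w : List ℕ) : Fin m → ℕ × ℕ := fun a => boxOf (w.drop (m - 1 - a))

lemma tabOf_split {m : ℕ} {w : List ℕ} (hw : w.length = m) (a : Fin m) :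
    ∃ u c s, w = u ++ c :: s ∧ s.length = a ∧ tabOf m w a = (s.count c + 1, s.count c + 1 + c) := by
  have h1 : m - 1 - a < w.length := by omega
  refine ⟨w.take (m - 1 - a), w[m - 1 - a], w.drop (m - 1 - a + 1), ?_, ?_, ?_⟩
  · rw [← List.drop_eq_getElem_cons h1, List.take_append_drop]
  · simp; omega
  · simp only [tabOf]; rw [List.drop_eq_getElem_cons h1]; rfl

lemma tabOf_of_split {m : ℕ} {u : List ℕ} {c : ℕ} {s : List ℕ} (hw : (u ++ c :: s).length = m)
    (h : s.length < m) :
    tabOf m (u ++ c :: s) ⟨s.length, h⟩ = (s.count c + 1, s.count c + 1 + c) := by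
  have : m - 1 - s.length = u.length := by simp at hw; omega
  simp [tabOf, this, boxOf]

lemma suffix_of_lt {u v s t : List ℕ} {c d : ℕ} (h : u ++ c :: s = v ++ d :: t)
    (hl : s.length < t.length) : ∃ z, t = z ++ c :: s := by
  have h1 : c :: s <:+ v ++ d :: t := ⟨u, h⟩
  have h2 : t <:+ v ++ d :: t := ⟨v ++ [d], by simp⟩
  obtain ⟨z, hz⟩ := List.suffix_of_suffix_length_le h1 h2 (by simp; omega)
  exact ⟨z, hz.symm⟩

lemma exists_split_count (w : List ℕ) (c r : ℕ) (h1 : 1 ≤ r) (h2 : r ≤ w.count c) :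
    ∃ u s, w = u ++ c :: s ∧ s.count c + 1 = r := by
  induction w with
  | nil => simp at h2; omega
  | cons a w ih =>
    by_cases hr : r ≤ w.count c
    · obtain ⟨u, s, h, h'⟩ := ih hr
      exact ⟨a :: u, s, by simp [h], h'⟩
    · by_cases ha : a = c
      · subst ha
        simp at h2
        exact ⟨[], w, rfl, by omega⟩
      · simp [ha] at h2; omega

lemma mem_diagram {l : List ℕ} (hl : l.IsChain (· > ·)) (r c : ℕ) :
    (r, r + c) ∈ diagram l ↔ 1 ≤ r ∧ r ≤ l.countP (fun p => c < p) := by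
  induction l generalizing r with
  | nil => simp [diagram]; omega
  | cons a l ih =>
    have hp := List.isChain_iff_pairwise.1 hl
    rw [List.pairwise_cons] at hp
    specialize ih (List.isChain_iff_pairwise.2 hp.2)
    have hcount : ¬ c < a → l.countP (fun p => c < p) = 0 := by
      intro h
      rw [List.countP_eq_zero]
      intro x hx
      have := hp.1 x hx
      simp; omega
    rcases r with _ | _ | r
    · simp [diagram]
    · by_cases hca : c < a
      · simp [diagram, hca]; omega
      · simp [diagram, hca, hcount hca]; omega
    · have := ih (r + 1)
      simp only [diagram, Set.mem_ofPred_eq] at this ⊢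
      by_cases hca : c < a
      · simp [hca] at this ⊢; omega
      · simp [hca, hcount hca] at this ⊢; omega

/-- Rows of the shape with counting function `N`. -/
def rowsOf (N : ℕ → ℕ) : ℕ → List ℕ
  | 0 => []
  | j + 1 => if N j = N (j + 1) + 1 then (j + 1) :: rowsOf N j else rowsOf N j

lemma rowsOf_le (N : ℕ → ℕ) (j : ℕ) : ∀ x ∈ rowsOf N j, 0 < x ∧ x ≤ j := by
  induction j with
  | zero => simp [rowsOf]
  | succ j ih =>
    intro x hx
    unfold rowsOf at hx
    split_ifs at hx
    · rcases List.mem_cons.1 hx with h | h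
      · omega
      · have := ih x h; omega
    · have := ih x hx; omega

lemma rowsOf_chain (N : ℕ → ℕ) (j : ℕ) : (rowsOf N j).IsChain (· > ·) := by
  rw [List.isChain_iff_pairwise]
  induction j with
  | zero => simp [rowsOf]
  | succ j ih =>
    unfold rowsOf
    split_ifs
    · rw [List.pairwise_cons]
      exact ⟨fun x hx => by have := rowsOf_le N j x hx; omega, ih⟩
    · exact ih

lemma rowsOf_count (N : ℕ → ℕ) (hN : ∀ c, N (c + 1) ≤ N c ∧ N c ≤ N (c + 1) + 1) (j c : ℕ) :
    (rowsOf N j).countP (fun p => c < p) + N (max j c) = N c := by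
  induction j with
  | zero => simp [rowsOf]
  | succ j ih =>
    have h0 := hN j
    rcases Nat.lt_or_ge c (j + 1) with h | h
    · rw [max_eq_left (by omega)] at ih ⊢
      unfold rowsOf
      split_ifs with h1
      · simp [h]; omega
      · omega
    · rw [max_eq_right (by omega)] at ih ⊢
      unfold rowsOf
      split_ifs with h1
      · rw [List.countP_cons, if_neg (by simp; omega)]; omega
      · omega

lemma sum_eq_countP (l : List ℕ) (n : ℕ) (h : ∀ x ∈ l, x ≤ n) :
    l.sum = ∑ c ∈ Finset.range n, l.countP (fun p => c < p) := by
  induction l with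
  | nil => simp
  | cons a l ih =>
    have ha : a ≤ n := h a (by simp)
    rw [List.sum_cons, ih (fun x hx => h x (by simp [hx]))]
    simp only [List.countP_cons, Finset.sum_add_distrib, decide_eq_true_eq]
    rw [add_comm, Finset.sum_ite, ]
    simp
    rw [show (Finset.range n).filter (fun c => c < a) = Finset.range a by ext; simp; omega]
    simp

lemma length_eq_count (w : List ℕ) (n : ℕ) (h : ∀ x ∈ w, x < n) :
    w.length = ∑ c ∈ Finset.range n, w.count c := by
  have := Multiset.sum_count_eq_card (s := Finset.range n) (m := (w : Multiset ℕ))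
    (by simpa using h)
  simpa using this.symm

lemma BPath.lt {n : ℕ} {w : List ℕ} (h : BPath n w) : ∀ x ∈ w, x < n := by
  induction w with
  | nil => simp
  | cons a w ih =>
    intro x hx
    rcases List.mem_cons.1 hx with rfl | hx
    · exact h.2.1
    · exact ih h.1 x hx

lemma BPath.isSYT {n m : ℕ} {w : List ℕ} (h : BPath n w) (hw : w.length = m) :
    IsSYT (rowsOf (fun c => w.count c) n) m (tabOf m w) := by
  have hinv := h.inv
  have hcnt : ∀ c, (rowsOf (fun c => w.count c) n).countP (fun p => c < p) = w.count c := by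
    intro c
    have := rowsOf_count (fun c => w.count c) hinv.1 n c
    have h2 := hinv.2 (max n c) (le_max_left _ _)
    omega
  have key : ∀ {u v s t : List ℕ} {c d : ℕ}, w = u ++ c :: s → w = v ++ d :: t →
      s.length < t.length → ∀ x, (c :: s).count x ≤ t.count x := by
    intro u v s t c d h1 h2 hl x
    obtain ⟨z, hz⟩ := suffix_of_lt (h1.symm.trans h2) hl
    rw [hz, List.count_append]; omega
  refine ⟨?_, ?_, ?_, ?_⟩
  · intro a b hab
    obtain ⟨u, c, s, h1, h2, h3⟩ := tabOf_split hw a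
    obtain ⟨v, d, t, h4, h5, h6⟩ := tabOf_split hw b
    rw [h3, h6] at hab
    simp only [Prod.mk.injEq] at hab
    have hcd : c = d := by omega
    subst hcd
    by_contra hne
    have hne' : (a : ℕ) ≠ b := fun h => hne (Fin.ext h)
    rcases Nat.lt_or_gt_of_ne hne' with hlt | hlt
    · have := key h1 h4 (by omega) c
      simp at this; omega
    · have := key h4 h1 (by omega) c
      simp at this; omega
  · ext ⟨r, q⟩
    constructor
    · rintro ⟨a, ha⟩
      obtain ⟨u, c, s, h1, h2, h3⟩ := tabOf_split hw a
      rw [← ha, h3, mem_diagram (rowsOf_chain _ _), hcnt]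
      refine ⟨by omega, ?_⟩
      rw [h1]; simp
    · intro hq
      obtain ⟨c, rfl⟩ : ∃ c, q = r + c := Nat.exists_eq_add_of_le hq.2.2.1
      rw [mem_diagram (rowsOf_chain _ _), hcnt] at hq
      obtain ⟨u, s, h1, h2⟩ := exists_split_count w c r hq.1 hq.2
      subst h1
      have hs : s.length < m := by rw [← hw]; simp; omega
      exact ⟨⟨s.length, hs⟩, by rw [tabOf_of_split hw hs, h2]⟩
  · intro a b hr hc
    obtain ⟨u, c, s, h1, h2, h3⟩ := tabOf_split hw a
    obtain ⟨v, d, t, h4, h5, h6⟩ := tabOf_split hw b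
    rw [h3, h6] at hr hc
    simp only at hr hc
    by_contra hne
    have hne' : (b : ℕ) ≠ a := by
      intro h
      have : b = a := Fin.ext h
      subst this
      rw [h3] at h6
      simp only [Prod.mk.injEq] at h6; omega
    have hlt : (b : ℕ) < a := by
      have := Fin.not_lt.1 hne
      have : (b : ℕ) ≤ a := this
      omega
    have := key h4 h1 (by omega) d
    simp at this
    have hs : BPath n s := BPath.suffix (u ++ [c]) (by rw [h1] at h; simpa using h)
    have := hs.anti c (d - c)
    rw [show c + (d - c) = d by omega] at this
    omega
  · intro a b hr hc
    obtain ⟨u, c, s, h1, h2, h3⟩ := tabOf_split hw a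
    obtain ⟨v, d, t, h4, h5, h6⟩ := tabOf_split hw b
    rw [h3, h6] at hr hc
    simp only at hr hc
    by_contra hne
    have hne' : (b : ℕ) ≠ a := by
      intro h
      have : b = a := Fin.ext h
      subst this
      rw [h3] at h6
      simp only [Prod.mk.injEq] at h6; omega
    have hlt : (b : ℕ) < a := by
      have := Fin.not_lt.1 hne
      have : (b : ℕ) ≤ a := this
      omega
    have := key h4 h1 (by omega) d
    simp at this
    have hs : BPath n s := BPath.suffix (u ++ [c]) (by rw [h1] at h; simpa using h)
    have := hs.anti d (c - d)
    rw [show d + (c - d) = c by omega] at this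
    omega

/-- The word of residues of the first `t` boxes. -/
def wordOf (g : ℕ → ℕ × ℕ) : ℕ → List ℕ
  | 0 => []
  | t + 1 => ((g t).2 - (g t).1) :: wordOf g t

lemma wordOf_length (g : ℕ → ℕ × ℕ) (t : ℕ) : (wordOf g t).length = t := by
  induction t with
  | zero => rfl
  | succ t ih => simp [wordOf, ih]

lemma wordOf_drop (g : ℕ → ℕ × ℕ) (t s : ℕ) : (wordOf g (t + s)).drop s = wordOf g t := by
  induction s with
  | zero => simp
  | succ s ih => rw [← add_assoc]; simp [wordOf, ih]

lemma countP_step {l : List ℕ} (hl : l.IsChain (· > ·)) (c : ℕ) :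
    l.countP (fun p => c + 1 < p) ≤ l.countP (fun p => c < p) ∧
    l.countP (fun p => c < p) ≤ l.countP (fun p => c + 1 < p) + 1 := by
  induction l with
  | nil => simp
  | cons a l ih =>
    have hp := List.isChain_iff_pairwise.1 hl
    rw [List.pairwise_cons] at hp
    specialize ih (List.isChain_iff_pairwise.2 hp.2)
    have hcount : a ≤ c + 1 → l.countP (fun p => c < p) = 0 := by
      intro h
      rw [List.countP_eq_zero]
      intro x hx
      have := hp.1 x hx
      simp; omega
    simp only [List.countP_cons, decide_eq_true_eq]
    by_cases h1 : a ≤ c + 1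
    · have := hcount h1
      split_ifs <;> omega
    · rw [if_pos (by omega), if_pos (by omega)]; omega

lemma IsSYT.word {n m : ℕ} {l : List ℕ} (hl : l.IsChain (· > ·)) (hn : ∀ x ∈ l, 0 < x ∧ x ≤ n)
    {f : Fin m → ℕ × ℕ} (hf : IsSYT l m f) (g : ℕ → ℕ × ℕ) (hg : ∀ a : Fin m, g a = f a) :
    ∀ t, t ≤ m → BPath n (wordOf g t) ∧
      (∀ c r, 1 ≤ r → (r ≤ (wordOf g t).count c ↔ ∃ a, a < t ∧ g a = (r, r + c))) ∧
      ∀ a, a < t → g a = boxOf (wordOf g (a + 1)) := by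
  obtain ⟨hinj, hrange, hrow, hcol⟩ := hf
  have hD : ∀ r c, (∃ a, a < m ∧ g a = (r, r + c)) ↔ 1 ≤ r ∧ r ≤ l.countP (fun p => c < p) := by
    intro r c
    rw [← mem_diagram hl, ← hrange]
    constructor
    · rintro ⟨a, ha, h⟩; exact ⟨⟨a, ha⟩, by rw [← hg]; exact h⟩
    · rintro ⟨a, h⟩; exact ⟨a, a.2, by rw [hg]; exact h⟩
  have hinj' : ∀ a b, a < m → b < m → g a = g b → a = b := by
    intro a b ha hb h
    have := @hinj ⟨a, ha⟩ ⟨b, hb⟩ (by rw [← hg, ← hg]; exact h)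
    simpa using this
  have hrow' : ∀ a b, a < m → b < m → (g a).1 = (g b).1 → (g a).2 < (g b).2 → a < b := by
    intro a b ha hb h1 h2
    exact hrow ⟨a, ha⟩ ⟨b, hb⟩ (by rw [← hg, ← hg]; exact h1) (by rw [← hg, ← hg]; exact h2)
  have hcol' : ∀ a b, a < m → b < m → (g a).2 = (g b).2 → (g a).1 < (g b).1 → a < b := by
    intro a b ha hb h1 h2
    exact hcol ⟨a, ha⟩ ⟨b, hb⟩ (by rw [← hg, ← hg]; exact h1) (by rw [← hg, ← hg]; exact h2)
  intro t
  induction t with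
  | zero => intro _; simp [wordOf, BPath]; omega
  | succ t ih =>
    intro ht
    obtain ⟨ih1, ih2, ih3⟩ := ih (by omega)
    have htm : t < m := by omega
    obtain ⟨r0, c0, hr0⟩ : ∃ r0 c0, g t = (r0, r0 + c0) := by
      have : f ⟨t, htm⟩ ∈ diagram l := by rw [← hrange]; exact ⟨_, rfl⟩
      have h3 : (f ⟨t, htm⟩).1 ≤ (f ⟨t, htm⟩).2 := this.2.2.1
      refine ⟨(f ⟨t, htm⟩).1, (f ⟨t, htm⟩).2 - (f ⟨t, htm⟩).1, ?_⟩
      rw [Nat.add_sub_cancel' h3]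
      exact hg ⟨t, htm⟩
    obtain ⟨hr1, hr2⟩ := (hD r0 c0).1 ⟨t, htm, hr0⟩
    have hc0 : (g t).2 - (g t).1 = c0 := by rw [hr0]; simp
    have st := countP_step hl
    -- right neighbour is not there
    have A1 : (wordOf g t).count (c0 + 1) < r0 := by
      by_contra hcon
      obtain ⟨a, ha, h⟩ := (ih2 (c0 + 1) r0 hr1).1 (by omega)
      have := hrow' t a htm (by omega) (by rw [hr0, h]) (by rw [hr0, h]; simp)
      omega
    -- same diagonal upper bound
    have A2 : (wordOf g t).count c0 < r0 := by
      by_contra hcon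
      obtain ⟨a, ha, h⟩ := (ih2 c0 r0 hr1).1 (by omega)
      have := hinj' t a htm (by omega) (by rw [hr0, h])
      omega
    have A3 : 2 ≤ r0 → r0 - 1 ≤ (wordOf g t).count (c0 + 1) ∧ r0 - 1 ≤ (wordOf g t).count c0 := by
      intro h2
      have s1 := st c0
      obtain ⟨a, ha, h⟩ := (hD (r0 - 1) (c0 + 1)).2 ⟨by omega, by omega⟩
      obtain ⟨b, hb, h'⟩ := (hD (r0 - 1) c0).2 ⟨by omega, by omega⟩
      have q1 := hcol' a t ha htm (by rw [hr0, h]; simp; omega) (by rw [hr0, h]; simp; omega)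
      have q2 := hrow' b a hb ha (by rw [h', h]) (by rw [h', h]; simp)
      exact ⟨(ih2 (c0 + 1) (r0 - 1) (by omega)).2 ⟨a, q1, h⟩,
        (ih2 c0 (r0 - 1) (by omega)).2 ⟨b, by omega, h'⟩⟩
    have B1 : (wordOf g t).count c0 + 1 = r0 := by
      by_cases h2 : 2 ≤ r0
      · have := A3 h2; omega
      · omega
    have B2 : (wordOf g t).count (c0 + 1) + 1 = r0 := by
      by_cases h2 : 2 ≤ r0
      · have := A3 h2; omega
      · omega
    have B3 : c0 = 0 ∨ (wordOf g t).count (c0 - 1) = r0 := by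
      rcases c0 with _ | c
      · left; rfl
      right
      simp only [Nat.add_sub_cancel]
      have s1 := st c
      obtain ⟨a, ha, h⟩ := (hD r0 c).2 ⟨by omega, by omega⟩
      have q1 := hrow' a t ha htm (by rw [hr0, h]) (by rw [hr0, h]; simp)
      have q2 := (ih2 c r0 hr1).2 ⟨a, q1, h⟩
      have q3 : (wordOf g t).count c < r0 + 1 := by
        by_contra hcon
        obtain ⟨a, ha, h⟩ := (ih2 c (r0 + 1) (by omega)).1 (by omega)
        have := hcol' t a htm (by omega) (by rw [hr0, h]; simp; omega) (by rw [hr0, h]; simp)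
        omega
      omega
    have B4 : c0 < n := by
      have : 0 < l.countP (fun p => c0 < p) := by omega
      obtain ⟨p, hp, hp'⟩ := List.countP_pos_iff.1 this
      have := hn p hp
      simp at hp'; omega
    refine ⟨?_, ?_, ?_⟩
    · simp only [wordOf, hc0, BPath]
      exact ⟨ih1, B4, by omega, by omega⟩
    · intro c r hr
      simp only [wordOf, hc0]
      by_cases hc : c0 = c
      · subst hc
        simp only [List.count_cons_self]
        constructor
        · intro h
          rcases Nat.lt_or_ge (List.count c0 (wordOf g t)) r with h' | h'
          · have : r = r0 := by omega
            exact ⟨t, by omega, by rw [this]; exact hr0⟩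
          · obtain ⟨a, ha, h⟩ := (ih2 c0 r hr).1 h'
            exact ⟨a, by omega, h⟩
        · rintro ⟨a, ha, h⟩
          rcases Nat.lt_or_ge a t with h' | h'
          · have := (ih2 c0 r hr).2 ⟨a, h', h⟩
            omega
          · have : a = t := by omega
            subst this
            rw [hr0] at h
            simp at h; omega
      · rw [List.count_cons_of_ne hc, ih2 c r hr]
        constructor
        · rintro ⟨a, ha, h⟩; exact ⟨a, by omega, h⟩
        · rintro ⟨a, ha, h⟩
          refine ⟨a, ?_, h⟩
          by_contra h'
          have : a = t := by omega
          subst this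
          rw [hr0] at h
          simp at h; omega
    · intro a ha
      rcases Nat.lt_or_ge a t with h' | h'
      · exact ih3 a h'
      · have : a = t := by omega
        subst this
        simp only [wordOf, boxOf, hc0, B1]
        exact hr0

/-- Pairs of paths with the same content. -/
def BPairs (n m : ℕ) : Type :=
  {p : List ℕ × List ℕ // (BPath n p.1 ∧ p.1.length = m) ∧ (BPath n p.2 ∧ p.2.length = m) ∧
    p.1.Perm p.2}

lemma rowsOf_sum {n m : ℕ} {w : List ℕ} (h : BPath n w) (hw : w.length = m) :
    (rowsOf (fun c => w.count c) n).sum = m := by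
  have hinv := h.inv
  have hcnt : ∀ c, (rowsOf (fun c => w.count c) n).countP (fun p => c < p) = w.count c := by
    intro c
    have := rowsOf_count (fun c => w.count c) hinv.1 n c
    have h2 := hinv.2 (max n c) (le_max_left _ _)
    omega
  rw [sum_eq_countP _ n (fun x hx => (rowsOf_le _ _ x hx).2), ← hw, length_eq_count w n h.lt]
  exact Finset.sum_congr rfl (fun c _ => hcnt c)

lemma tabOf_inj {m : ℕ} {w w' : List ℕ} (hw : w.length = m) (hw' : w'.length = m)
    (h : tabOf m w = tabOf m w') : w = w' := by
  apply List.ext_getElem (by omega)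
  intro i h1 h2
  have hi : m - 1 - i < m := by omega
  have h3 := congrFun h ⟨m - 1 - i, hi⟩
  have e : m - 1 - (m - 1 - i) = i := by omega
  simp only [tabOf, e] at h3
  rw [List.drop_eq_getElem_cons h1, List.drop_eq_getElem_cons h2] at h3
  simp only [boxOf, Prod.mk.injEq] at h3
  omega

lemma IsSYT.exists_word {n m : ℕ} {l : List ℕ} (hl : l.IsChain (· > ·))
    (hn : ∀ x ∈ l, 0 < x ∧ x ≤ n) {f : Fin m → ℕ × ℕ} (hf : IsSYT l m f) :
    ∃ w, BPath n w ∧ w.length = m ∧ tabOf m w = f ∧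
      ∀ c, w.count c = l.countP (fun p => c < p) := by
  obtain ⟨g, hg⟩ : ∃ g : ℕ → ℕ × ℕ, ∀ a : Fin m, g a = f a :=
    ⟨fun a => if h : a < m then f ⟨a, h⟩ else 0, fun a => by simp⟩
  obtain ⟨h1, h2, h3⟩ := hf.word hl hn g hg m le_rfl
  refine ⟨wordOf g m, h1, wordOf_length g m, ?_, ?_⟩
  · funext a
    rw [← hg, h3 a a.2]
    unfold tabOf
    have := wordOf_drop g (a + 1) (m - 1 - a)
    rw [show (a : ℕ) + 1 + (m - 1 - a) = m by omega] at this
    rw [this]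
  · intro c
    have key : ∀ r, 1 ≤ r → (r ≤ (wordOf g m).count c ↔ r ≤ l.countP (fun p => c < p)) := by
      intro r hr
      rw [h2 c r hr]
      have := mem_diagram hl r c
      rw [← hf.2.1] at this
      constructor
      · rintro ⟨a, ha, h⟩
        exact (this.1 ⟨⟨a, ha⟩, by rw [← hg]; exact h⟩).2
      · intro h
        obtain ⟨a, ha⟩ := this.2 ⟨hr, h⟩
        exact ⟨a, a.2, by rw [hg]; exact ha⟩
    have k1 := key ((wordOf g m).count c)
    have k2 := key (l.countP (fun p => c < p))
    omega

lemma card_BPairs (n m : ℕ) : Nat.card (BPairs n m) = Nat.card (TabPairs n m) := by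
  have wd : ∀ p : BPairs n m, ∃ l : List ℕ, l.IsChain (· > ·) ∧ (∀ x ∈ l, 0 < x ∧ x ≤ n) ∧
      l.sum = m ∧ IsSYT l m (tabOf m p.1.1) ∧ IsSYT l m (tabOf m p.1.2) := by
    rintro ⟨⟨u, v⟩, ⟨h1, h2⟩, ⟨h3, h4⟩, h5⟩
    refine ⟨rowsOf (fun c => u.count c) n, rowsOf_chain _ _, rowsOf_le _ _, rowsOf_sum h1 h2,
      h1.isSYT h2, ?_⟩
    have e : (fun c => u.count c) = (fun c => v.count c) := by
      funext c; exact h5.count_eq c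
    rw [e]
    exact h3.isSYT h4
  apply Nat.card_congr
  refine Equiv.ofBijective (fun p => (⟨(tabOf m p.1.1, tabOf m p.1.2), wd p⟩ : TabPairs n m)) ⟨?_, ?_⟩
  · rintro ⟨⟨u, v⟩, ⟨h1, h2⟩, ⟨h3, h4⟩, h5⟩ ⟨⟨u', v'⟩, ⟨h1', h2'⟩, ⟨h3', h4'⟩, h5'⟩ h
    have h' := congrArg Subtype.val h
    simp only [Prod.mk.injEq] at h'
    apply Subtype.ext
    exact Prod.ext (tabOf_inj h2 h2' h'.1) (tabOf_inj h4 h4' h'.2)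
  · rintro ⟨⟨f, f'⟩, l, hl, hn, hs, hf, hf'⟩
    obtain ⟨u, h1, h2, h3, h4⟩ := hf.exists_word hl hn
    obtain ⟨v, h1', h2', h3', h4'⟩ := hf'.exists_word hl hn
    refine ⟨⟨(u, v), ⟨h1, h2⟩, ⟨h1', h2'⟩, ?_⟩, ?_⟩
    · exact List.perm_iff_count.2 (fun c => by rw [h4, h4'])
    · apply Subtype.ext
      exact Prod.ext h3 h3'


lemma pos_of_two {n : ℕ} (hn : 2 ≤ n) : 0 < n := lt_of_lt_of_le Nat.zero_lt_two hn

/-! ### Minuscule paths -/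

/-- The weight reached by a word. -/
def wt {N : ℕ} (A : Fin N → Fin N → ℤ) (Λ : Fin N → ℤ) : List (Fin N) → Fin N → ℤ
  | [] => Λ
  | j :: w => fun i => wt A Λ w i - A i j

/-- Minuscule paths. -/
def MPath {N : ℕ} (A : Fin N → Fin N → ℤ) (Λ : Fin N → ℤ) : List (Fin N) → Prop
  | [] => True
  | j :: w => MPath A Λ w ∧ wt A Λ w j = 1

/-- Properties of minuscule data used in the algebraic part. -/
structure Good {N : ℕ} (A : Fin N → Fin N → ℤ) (Λ : Fin N → ℤ) : Prop where
  diag : ∀ i, A i i = 2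
  off : ∀ i j, i ≠ j → A i j = 0 ∨ A i j = -1 ∨ A i j = -2
  sym : ∀ i j, A i j = 0 → A j i = 0
  fund : ∀ i, Λ i = 0 ∨ Λ i = 1
  range : ∀ w, MPath A Λ w → ∀ i, -1 ≤ wt A Λ w i ∧ wt A Λ w i ≤ 1
  nbr : ∀ w, MPath A Λ w → ∀ i j, i ≠ j → A i j ≠ 0 → wt A Λ w i = 1 → wt A Λ w j = 1 → False
  two : ∀ w, MPath A Λ w → ∀ i j, A i j = -2 → wt A Λ w i ≠ 0

/-- Pairs of minuscule paths with the same content. -/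
def MPairs {N : ℕ} (A : Fin N → Fin N → ℤ) (Λ : Fin N → ℤ) (m : ℕ) : Type :=
  {p : List (Fin N) × List (Fin N) // (MPath A Λ p.1 ∧ p.1.length = m) ∧
    (MPath A Λ p.2 ∧ p.2.length = m) ∧ p.1.Perm p.2}

lemma card_MPairs {N n m : ℕ} {A : Fin N → Fin N → ℤ} {Λ : Fin N → ℤ} (π : Fin N → ℕ)
    (h1 : ∀ w, MPath A Λ w → BPath n (w.map π))
    (h2 : ∀ u v, MPath A Λ u → MPath A Λ v → u.map π = v.map π → u = v)
    (h3 : ∀ v, BPath n v → ∃ w, MPath A Λ w ∧ w.map π = v)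
    (h4 : ∀ u v, MPath A Λ u → MPath A Λ v → (u.map π).Perm (v.map π) → u.Perm v) :
    Nat.card (MPairs A Λ m) = Nat.card (BPairs n m) := by
  apply Nat.card_congr
  refine Equiv.ofBijective (fun p => (⟨(p.1.1.map π, p.1.2.map π),
    ⟨h1 _ p.2.1.1, by simpa using p.2.1.2⟩, ⟨h1 _ p.2.2.1.1, by simpa using p.2.2.1.2⟩,
    p.2.2.2.map π⟩ : BPairs n m)) ⟨?_, ?_⟩
  · rintro ⟨⟨u, v⟩, a, b, c⟩ ⟨⟨u', v'⟩, a', b', c'⟩ h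
    have h' := congrArg Subtype.val h
    simp only [Prod.mk.injEq] at h'
    apply Subtype.ext
    exact Prod.ext (h2 _ _ a.1 a'.1 h'.1) (h2 _ _ b.1 b'.1 h'.2)
  · rintro ⟨⟨u, v⟩, a, b, c⟩
    obtain ⟨u', ha, rfl⟩ := h3 u a.1
    obtain ⟨v', hb, rfl⟩ := h3 v b.1
    exact ⟨⟨(u', v'), ⟨ha, by simpa using a.2⟩, ⟨hb, by simpa using b.2⟩, h4 _ _ ha hb c⟩, rfl⟩

lemma count_val {N : ℕ} (w : List (Fin N)) (i : Fin N) :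
    w.count i = (w.map (fun j : Fin N => (j : ℕ))).count (i : ℕ) := by
  induction w with
  | nil => rfl
  | cons a w ih =>
    rw [List.map_cons, List.count_cons, List.count_cons, ih]
    by_cases h : a = i
    · subst h; simp
    · have : (a : ℕ) ≠ i := fun h' => h (Fin.ext h')
      simp [h, this]

/-- Count of a letter by its value. -/
def cv {N : ℕ} (w : List (Fin N)) (c : ℕ) : ℕ := (w.map (fun j : Fin N => (j : ℕ))).count c

lemma cv_cons {N : ℕ} (w : List (Fin N)) (j : Fin N) (c : ℕ) :
    cv (j :: w) c = cv w c + if (j : ℕ) = c then 1 else 0 := by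
  simp [cv, List.count_cons]

lemma cv_ge {N : ℕ} (w : List (Fin N)) (c : ℕ) (h : N ≤ c) : cv w c = 0 := by
  induction w with
  | nil => rfl
  | cons a w ih => rw [cv_cons, ih, if_neg (by omega)]

lemma perm_of_cv {N : ℕ} (u v : List (Fin N)) (h : ∀ c, cv u c = cv v c) : u.Perm v := by
  rw [List.perm_iff_count]
  intro i
  have e1 := count_val u i
  have e2 := count_val v i
  have := h i
  unfold cv at this
  convert e1.trans (this.trans e2.symm)

lemma wtB {n : ℕ} (hn : 2 ≤ n) (w : List (Fin n)) (i : Fin n) :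
    ((i : ℕ) = 0 → wt (AB n) (Pi.single ⟨0, pos_of_two hn⟩ 1) w i = 1 - 2 * cv w 0 + 2 * cv w 1) ∧
    ((i : ℕ) ≠ 0 → wt (AB n) (Pi.single ⟨0, pos_of_two hn⟩ 1) w i =
      cv w (i - 1) - 2 * cv w i + cv w (i + 1)) := by
  induction w with
  | nil =>
    constructor
    · intro h
      have : i = ⟨0, pos_of_two hn⟩ := Fin.ext h
      simp [wt, cv, this]
    · intro h
      have : i ≠ ⟨0, pos_of_two hn⟩ := fun h' => h (by rw [h'])
      simp [wt, cv, this]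
  | cons j w ih =>
    constructor
    · intro h
      have := ih.1 h
      simp only [wt, this, cv_cons, AB, Fin.ext_iff]
      push_cast
      split_ifs <;> omega
    · intro h
      have := ih.2 h
      simp only [wt, this, cv_cons, AB, Fin.ext_iff]
      push_cast
      split_ifs <;> omega

lemma MPathB {n : ℕ} (hn : 2 ≤ n) (w : List (Fin n)) :
    MPath (AB n) (Pi.single ⟨0, pos_of_two hn⟩ 1) w ↔ BPath n (w.map (fun j : Fin n => (j : ℕ))) := by
  induction w with
  | nil => simp [MPath, BPath]
  | cons j w ih =>
    simp only [MPath, List.map_cons, BPath, ih]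
    refine and_congr_right (fun h => ?_)
    have inv := h.inv
    change (∀ c, cv w (c + 1) ≤ cv w c ∧ cv w c ≤ cv w (c + 1) + 1) ∧
      (∀ c, n ≤ c → cv w c = 0) at inv
    change _ ↔ (j : ℕ) < n ∧ cv w j = cv w (j + 1) ∧ ((j : ℕ) = 0 ∨ cv w (j - 1) = cv w j + 1)
    obtain ⟨w1, w2⟩ := wtB hn w j
    have i1 := inv.1 j
    have i2 := inv.1 (j - 1)
    have hj := j.2
    by_cases h0 : (j : ℕ) = 0
    · rw [w1 h0]
      simp only [h0, zero_add, true_or, and_true] at i1 ⊢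
      omega
    · rw [w2 h0]
      rw [Nat.sub_add_cancel (by omega)] at i2
      omega

lemma invB {n : ℕ} (hn : 2 ≤ n) (w : List (Fin n))
    (h : MPath (AB n) (Pi.single ⟨0, pos_of_two hn⟩ 1) w) (c : ℕ) :
    cv w (c + 1) ≤ cv w c ∧ cv w c ≤ cv w (c + 1) + 1 :=
  ((MPathB hn w).1 h).inv.1 c

lemma goodB {n : ℕ} (hn : 2 ≤ n) : Good (AB n) (Pi.single ⟨0, pos_of_two hn⟩ 1) where
  diag i := by simp [AB]
  off i j h := by simp only [AB, if_neg h]; split_ifs <;> simp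
  sym i j := by
    simp only [AB, Fin.ext_iff]
    split_ifs <;> first | omega | simp
  fund i := by
    by_cases h : i = ⟨0, pos_of_two hn⟩
    · right; simp [h]
    · left; simp [h]
  range w h i := by
    obtain ⟨w1, w2⟩ := wtB hn w i
    have i1 := invB hn w h i
    have i2 := invB hn w h (i - 1)
    by_cases h0 : (i : ℕ) = 0
    · rw [w1 h0]
      simp only [h0, zero_add] at i1 ⊢
      omega
    · rw [w2 h0]
      rw [Nat.sub_add_cancel (by omega)] at i2
      omega
  nbr w h i j hij hA h1 h2 := by
    wlog hlt : (i : ℕ) < j generalizing i j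
    · refine this j i (Ne.symm hij) ?_ h2 h1 ?_
      · intro h'
        apply hA
        revert h'
        simp only [AB, Fin.ext_iff]
        split_ifs <;> first | omega | simp
      · have : (i : ℕ) ≠ j := fun h => hij (Fin.ext h)
        omega
    have hj : (j : ℕ) = i + 1 := by
      by_contra h'
      apply hA
      simp only [AB, Fin.ext_iff]
      rw [if_neg (by omega), if_neg (by omega), if_neg (by omega)]
    obtain ⟨w1, w2⟩ := wtB hn w i
    obtain ⟨w3, w4⟩ := wtB hn w j
    rw [w4 (by omega)] at h2
    have i1 := invB hn w h i
    have i2 := invB hn w h (i - 1)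
    have i3 := invB hn w h j
    rw [hj] at h2 i3
    simp only [Nat.add_sub_cancel] at h2
    by_cases h0 : (i : ℕ) = 0
    · rw [w1 h0] at h1
      simp only [h0, zero_add] at *
      omega
    · rw [w2 h0] at h1
      rw [Nat.sub_add_cancel (by omega)] at i2
      omega
  two w h i j hA := by
    have h0 : (i : ℕ) = 0 := by
      by_contra h0
      revert hA
      simp only [AB]
      split_ifs <;> first | omega | simp
    rw [(wtB hn w i).1 h0]
    omega

lemma cardB {n : ℕ} (hn : 2 ≤ n) (m : ℕ) :
    Nat.card (MPairs (AB n) (Pi.single ⟨0, pos_of_two hn⟩ 1) m) = Nat.card (TabPairs n m) := by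
  rw [← card_BPairs]
  have hinj : Function.Injective (fun j : Fin n => (j : ℕ)) := fun a b h => Fin.ext h
  refine card_MPairs (fun j : Fin n => (j : ℕ)) (fun w h => (MPathB hn w).1 h) ?_ ?_ ?_
  · intro u v _ _ h
    exact List.map_injective_iff.2 hinj h
  · intro v hv
    have : ∃ w : List (Fin n), w.map (fun j : Fin n => (j : ℕ)) = v := by
      have hl := hv.lt
      clear hv
      induction v with
      | nil => exact ⟨[], rfl⟩
      | cons a v ih =>
        obtain ⟨w, hw⟩ := ih (fun x hx => hl x (by simp [hx]))
        exact ⟨⟨a, hl a (by simp)⟩ :: w, by simp [hw]⟩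
    obtain ⟨w, rfl⟩ := this
    exact ⟨w, (MPathB hn w).2 hv, rfl⟩
  · intro u v _ _ h
    exact perm_of_cv u v (fun c => h.count_eq c)

/-- Projection of type D letters to type B letters. -/
def piD {n : ℕ} (j : Fin n) : ℕ := (j : ℕ) - 1

lemma countD {n : ℕ} (w : List (Fin n)) (c : ℕ) :
    (w.map piD).count c = if c = 0 then cv w 0 + cv w 1 else cv w (c + 1) := by
  induction w with
  | nil => simp [cv]
  | cons j w ih =>
    rw [List.map_cons, List.count_cons, ih]
    simp only [cv_cons, piD, beq_iff_eq]
    split_ifs <;> omega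

lemma wtD {n : ℕ} (hn : 2 ≤ n) (Λ : Fin (n + 1) → ℤ)
    (hΛ : ∀ i : Fin (n + 1), 2 ≤ (i : ℕ) → Λ i = 0) (w : List (Fin (n + 1))) (i : Fin (n + 1)) :
    ((i : ℕ) ≤ 1 → wt (AD (n + 1)) Λ w i = Λ i - 2 * cv w i + cv w 2) ∧
    ((i : ℕ) = 2 → wt (AD (n + 1)) Λ w i = cv w 0 + cv w 1 - 2 * cv w 2 + cv w 3) ∧
    (3 ≤ (i : ℕ) → wt (AD (n + 1)) Λ w i = cv w (i - 1) - 2 * cv w i + cv w (i + 1)) := by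
  induction w with
  | nil =>
    refine ⟨fun h => ?_, fun h => ?_, fun h => ?_⟩
    · simp [wt, cv]
    · simp [wt, cv, hΛ i (by omega)]
    · simp [wt, cv, hΛ i (by omega)]
  | cons j w ih =>
    refine ⟨fun h => ?_, fun h => ?_, fun h => ?_⟩
    · simp only [wt, ih.1 h, cv_cons, AD, Fin.ext_iff]
      push_cast
      split_ifs <;> omega
    · simp only [wt, ih.2.1 h, cv_cons, AD, Fin.ext_iff]
      push_cast
      split_ifs <;> omega
    · simp only [wt, ih.2.2 h, cv_cons, AD, Fin.ext_iff]
      push_cast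
      split_ifs <;> omega

/-- The two half-spin weights. -/
structure Spin {n : ℕ} (a : ℤ) (Λ : Fin (n + 1) → ℤ) : Prop where
  ha : a = 0 ∨ a = 1
  h0 : ∀ i : Fin (n + 1), (i : ℕ) = 0 → Λ i = 1 - a
  h1 : ∀ i : Fin (n + 1), (i : ℕ) = 1 → Λ i = a
  h2 : ∀ i : Fin (n + 1), 2 ≤ (i : ℕ) → Λ i = 0

/-- The numerical invariants of a type D path. -/
def InvD {N : ℕ} (a : ℤ) (w : List (Fin N)) : Prop :=
  (cv w 2 ≤ cv w 0 + cv w 1 ∧ cv w 0 + cv w 1 ≤ cv w 2 + 1) ∧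
  (∀ c, 2 ≤ c → cv w (c + 1) ≤ cv w c ∧ cv w c ≤ cv w (c + 1) + 1) ∧
  (0 ≤ (cv w 0 : ℤ) - cv w 1 + a ∧ (cv w 0 : ℤ) - cv w 1 + a ≤ 1)

lemma BPathD_inv {n N : ℕ} {w : List (Fin N)} (h : BPath n (w.map piD)) :
    (cv w 2 ≤ cv w 0 + cv w 1 ∧ cv w 0 + cv w 1 ≤ cv w 2 + 1) ∧
    (∀ c, 2 ≤ c → cv w (c + 1) ≤ cv w c ∧ cv w c ≤ cv w (c + 1) + 1) := by
  have inv := h.inv.1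
  constructor
  · have := inv 0
    rw [countD, countD] at this
    simpa using this
  · intro c hc
    have := inv (c - 1)
    rw [countD, countD, if_neg (by omega), if_neg (by omega), Nat.sub_add_cancel (by omega)] at this
    exact this

lemma stepD {n : ℕ} (hn : 2 ≤ n) {a : ℤ} {Λ : Fin (n + 1) → ℤ} (hΛ : Spin a Λ)
    {w : List (Fin (n + 1))} (h : InvD a w) (j : Fin (n + 1)) :
    wt (AD (n + 1)) Λ w j = 1 ↔
      (((j : ℕ) = 0 → (cv w 0 : ℤ) - cv w 1 + a = 0) ∧
      ((j : ℕ) = 1 → (cv w 0 : ℤ) - cv w 1 + a = 1)) ∧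
      (w.map piD).count (piD j) = (w.map piD).count (piD j + 1) ∧
      (piD j = 0 ∨ (w.map piD).count (piD j - 1) = (w.map piD).count (piD j) + 1) := by
  obtain ⟨w1, w2, w3⟩ := wtD hn Λ hΛ.h2 w j
  obtain ⟨i1, i2, i3⟩ := h
  have ha := hΛ.ha
  simp only [countD, piD]
  rcases Nat.lt_or_ge (j : ℕ) 2 with hj | hj
  · rw [w1 (by omega)]
    have e : (j : ℕ) - 1 = 0 := by omega
    simp only [e, if_true, if_neg (Nat.succ_ne_zero 0), zero_add, true_or, and_true]
    rcases (show (j : ℕ) = 0 ∨ (j : ℕ) = 1 by omega) with e | e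
    · rw [hΛ.h0 j e, e]; simp; omega
    · rw [hΛ.h1 j e, e]; simp; omega
  · have j2 := i2 j hj
    rcases (show (j : ℕ) = 2 ∨ 3 ≤ (j : ℕ) by omega) with e | e
    · rw [w2 e]
      rw [e] at j2 ⊢
      simp only [Nat.reduceAdd] at j2
      simp
      omega
    · rw [w3 e]
      have j3 := i2 (j - 1) (by omega)
      rw [Nat.sub_add_cancel (by omega)] at j3
      rw [if_neg (by omega), if_neg (by omega), if_neg (by omega),
        Nat.sub_add_cancel (by omega), Nat.sub_add_cancel (by omega)]
      omega

lemma MPathD {n : ℕ} (hn : 2 ≤ n) {a : ℤ} {Λ : Fin (n + 1) → ℤ} (hΛ : Spin a Λ)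
    {w : List (Fin (n + 1))} (h : MPath (AD (n + 1)) Λ w) :
    BPath n (w.map piD) ∧ InvD a w := by
  induction w with
  | nil =>
    refine ⟨trivial, ?_⟩
    have := hΛ.ha
    simp [InvD, cv]; omega
  | cons j w ih =>
    obtain ⟨ih1, ih2⟩ := ih h.1
    obtain ⟨⟨s0, s1⟩, s2, s3⟩ := (stepD hn hΛ ih2 j).1 h.2
    have hb : BPath n ((j :: w).map piD) := by
      refine ⟨ih1, ?_, s2, s3⟩
      have := j.2
      simp only [piD]; omega
    refine ⟨hb, (BPathD_inv hb).1, (BPathD_inv hb).2, ?_⟩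
    obtain ⟨_, _, i3⟩ := ih2
    simp only [cv_cons]
    push_cast
    split_ifs <;> omega

lemma goodD {n : ℕ} (hn : 2 ≤ n) {a : ℤ} {Λ : Fin (n + 1) → ℤ} (hΛ : Spin a Λ) :
    Good (AD (n + 1)) Λ where
  diag i := by simp [AD]
  off i j h := by simp only [AD, if_neg h]; split_ifs <;> simp
  sym i j := by
    simp only [AD, Fin.ext_iff]
    split_ifs <;> first | omega | simp
  fund i := by
    have := hΛ.ha
    have := hΛ.h0 i
    have := hΛ.h1 i
    have := hΛ.h2 i
    omega
  range w h i := by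
    obtain ⟨w1, w2, w3⟩ := wtD hn Λ hΛ.h2 w i
    obtain ⟨i1, i2, i3⟩ := (MPathD hn hΛ h).2
    have ha := hΛ.ha
    have l0 := hΛ.h0 i
    have l1 := hΛ.h1 i
    rcases (show (i : ℕ) = 0 ∨ (i : ℕ) = 1 ∨ (i : ℕ) = 2 ∨ 3 ≤ (i : ℕ) by omega) with e | e | e | e
    · rw [w1 (by omega), l0 e, e]; omega
    · rw [w1 (by omega), l1 e, e]; omega
    · rw [w2 e]
      have := i2 2 le_rfl
      simp only [Nat.reduceAdd] at this
      omega
    · rw [w3 e]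
      have j2 := i2 i (by omega)
      have j3 := i2 (i - 1) (by omega)
      rw [Nat.sub_add_cancel (by omega)] at j3
      omega
  nbr w h i j hij hA h1 h2 := by
    wlog hlt : (i : ℕ) < j generalizing i j
    · refine this j i (Ne.symm hij) ?_ h2 h1 ?_
      · intro h'
        apply hA
        revert h'
        simp only [AD, Fin.ext_iff]
        split_ifs <;> first | omega | simp
      · have : (i : ℕ) ≠ j := fun h => hij (Fin.ext h)
        omega
    have hj : ((i : ℕ) ≤ 1 ∧ (j : ℕ) = 2) ∨ (2 ≤ (i : ℕ) ∧ (j : ℕ) = i + 1) := by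
      by_contra h'
      apply hA
      simp only [AD, Fin.ext_iff]
      rw [if_neg (by omega), if_neg (by omega), if_neg (by omega), if_neg (by omega)]
    obtain ⟨w1, w2, w3⟩ := wtD hn Λ hΛ.h2 w i
    obtain ⟨v1, v2, v3⟩ := wtD hn Λ hΛ.h2 w j
    obtain ⟨i1, i2, i3⟩ := (MPathD hn hΛ h).2
    have ha := hΛ.ha
    have l0 := hΛ.h0 i
    have l1 := hΛ.h1 i
    rcases hj with ⟨e, e'⟩ | ⟨e, e'⟩
    · rw [v2 e'] at h2
      rw [w1 e] at h1
      have := i2 2 le_rfl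
      simp only [Nat.reduceAdd] at this
      rcases (show (i : ℕ) = 0 ∨ (i : ℕ) = 1 by omega) with e | e
      · rw [l0 e, e] at h1; omega
      · rw [l1 e, e] at h1; omega
    · rw [v3 (by omega), e'] at h2
      have j2 := i2 i (by omega)
      have j4 := i2 (i + 1) (by omega)
      rcases (show (i : ℕ) = 2 ∨ 3 ≤ (i : ℕ) by omega) with e | e
      · rw [w2 e] at h1
        rw [e] at h2 j2 j4
        simp at h2 j2 j4
        omega
      · rw [w3 e] at h1
        have j3 := i2 (i - 1) (by omega)
        rw [Nat.sub_add_cancel (by omega)] at j3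
        simp only [Nat.add_sub_cancel] at h2
        omega
  two w h i j hA := by
    exfalso
    revert hA
    simp only [AD]
    split_ifs <;> simp

lemma cardD {n : ℕ} (hn : 2 ≤ n) (m : ℕ) {a : ℤ} {Λ : Fin (n + 1) → ℤ} (hΛ : Spin a Λ) :
    Nat.card (MPairs (AD (n + 1)) Λ m) = Nat.card (TabPairs n m) := by
  rw [← card_BPairs]
  have ha := hΛ.ha
  refine card_MPairs piD (fun w h => (MPathD hn hΛ h).1) ?_ ?_ ?_
  · intro u
    induction u with
    | nil =>
      intro v _ _ h
      cases v with
      | nil => rfl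
      | cons => simp at h
    | cons i u ih =>
      intro v hu hv h
      cases v with
      | nil => simp at h
      | cons j v =>
        simp only [List.map_cons, List.cons.injEq] at h
        have e := ih v hu.1 hv.1 h.2
        subst e
        have inv := (MPathD hn hΛ hu.1).2
        have s1 := ((stepD hn hΛ inv i).1 hu.2).1
        have s2 := ((stepD hn hΛ inv j).1 hv.2).1
        have h1 := h.1
        simp only [piD] at h1
        have : i = j := by apply Fin.ext; omega
        rw [this]
  · intro v
    induction v with
    | nil => intro _; exact ⟨[], trivial, rfl⟩
    | cons c v ih =>
      intro hv
      obtain ⟨w, hw, rfl⟩ := ih hv.1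
      obtain ⟨_, g1, g2, g3⟩ := hv
      have inv := (MPathD hn hΛ hw).2
      have i3 := inv.2.2
      obtain ⟨j, hj, q0, q1⟩ : ∃ j : Fin (n + 1), piD j = c ∧
          ((j : ℕ) = 0 → (cv w 0 : ℤ) - cv w 1 + a = 0) ∧
          ((j : ℕ) = 1 → (cv w 0 : ℤ) - cv w 1 + a = 1) := by
        by_cases hc : c = 0
        · by_cases h0 : (cv w 0 : ℤ) - cv w 1 + a = 0
          · exact ⟨⟨0, by omega⟩, by simp [piD, hc], fun _ => h0, fun h => by simp at h⟩
          · exact ⟨⟨1, by omega⟩, by simp [piD, hc], fun h => by simp at h, fun _ => by omega⟩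
        · exact ⟨⟨c + 1, by omega⟩, by simp [piD], fun h => by simp at h, fun h => by simp at h; omega⟩
      subst hj
      exact ⟨j :: w, ⟨hw, (stepD hn hΛ inv j).2 ⟨⟨q0, q1⟩, g2, g3⟩⟩, rfl⟩
  · intro u v hu hv h
    apply perm_of_cv
    have iu := (MPathD hn hΛ hu).2.2.2
    have iv := (MPathD hn hΛ hv).2.2.2
    have hc := fun c => h.count_eq c
    simp only [countD] at hc
    have c0 := hc 0
    simp at c0
    intro c
    rcases c with _ | _ | c
    · omega
    · simp; omega
    · have := hc (c + 1)
      simpa using this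


/-! ### The polynomials `Q` -/

section Poly

variable (k : Type) [Field k] {A : Type} [Ring A] [Algebra k A]

lemma eval2_super (p : MvPolynomial (Fin 2) k) (a b : A) (S : Finset (Fin 2 →₀ ℕ))
    (h : p.support ⊆ S) :
    eval2 k p a b =
      ∑ d ∈ S, algebraMap k A (MvPolynomial.coeff d p) * (a ^ d 0 * b ^ d 1) := by
  unfold eval2
  apply Finset.sum_subset h
  intro d _ hd
  rw [MvPolynomial.notMem_support_iff.1 hd]
  simp

lemma eval2_add (p q : MvPolynomial (Fin 2) k) (a b : A) :
    eval2 k (p + q) a b = eval2 k p a b + eval2 k q a b := by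
  rw [eval2_super k (p + q) a b (p.support ∪ q.support) MvPolynomial.support_add,
    eval2_super k p a b (p.support ∪ q.support) Finset.subset_union_left,
    eval2_super k q a b (p.support ∪ q.support) Finset.subset_union_right,
    ← Finset.sum_add_distrib]
  apply Finset.sum_congr rfl
  intro d _
  rw [MvPolynomial.coeff_add, map_add, add_mul]

lemma eval2_monomial (d : Fin 2 →₀ ℕ) (c : k) (a b : A) :
    eval2 k (MvPolynomial.monomial d c) a b = algebraMap k A c * (a ^ d 0 * b ^ d 1) := by
  rw [eval2_super k _ a b {d} MvPolynomial.support_monomial_subset]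
  simp

lemma eval2_zero (a b : A) : eval2 k (0 : MvPolynomial (Fin 2) k) a b = 0 := by
  simp [eval2]

lemma eval2_one (a b : A) : eval2 k (1 : MvPolynomial (Fin 2) k) a b = 1 := by
  have := eval2_monomial k (0 : Fin 2 →₀ ℕ) 1 a b
  simpa using this

lemma eval3_super (p : MvPolynomial (Fin 3) k) (a b c : A) (S : Finset (Fin 3 →₀ ℕ))
    (h : p.support ⊆ S) :
    eval3 k p a b c =
      ∑ d ∈ S, algebraMap k A (MvPolynomial.coeff d p) * (a ^ d 0 * b ^ d 1 * c ^ d 2) := by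
  unfold eval3
  apply Finset.sum_subset h
  intro d _ hd
  rw [MvPolynomial.notMem_support_iff.1 hd]
  simp

lemma eval3_add (p q : MvPolynomial (Fin 3) k) (a b c : A) :
    eval3 k (p + q) a b c = eval3 k p a b c + eval3 k q a b c := by
  rw [eval3_super k (p + q) a b c (p.support ∪ q.support) MvPolynomial.support_add,
    eval3_super k p a b c (p.support ∪ q.support) Finset.subset_union_left,
    eval3_super k q a b c (p.support ∪ q.support) Finset.subset_union_right,
    ← Finset.sum_add_distrib]
  apply Finset.sum_congr rfl
  intro d _
  rw [MvPolynomial.coeff_add, map_add, add_mul]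

lemma eval3_monomial (d : Fin 3 →₀ ℕ) (s : k) (a b c : A) :
    eval3 k (MvPolynomial.monomial d s) a b c =
      algebraMap k A s * (a ^ d 0 * b ^ d 1 * c ^ d 2) := by
  rw [eval3_super k _ a b c {d} MvPolynomial.support_monomial_subset]
  simp

lemma eval3_zero (a b c : A) : eval3 k (0 : MvPolynomial (Fin 3) k) a b c = 0 := by
  simp [eval3]

lemma Qbar_eq (p : MvPolynomial (Fin 2) k) (q : MvPolynomial (Fin 3) k)
    (h : MvPolynomial.rename (fun i : Fin 2 => if i = 0 then (0 : Fin 3) else 1) p -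
          MvPolynomial.rename (fun i : Fin 2 => if i = 0 then (2 : Fin 3) else 1) p =
        (MvPolynomial.X 0 - MvPolynomial.X 2) * q) : Qbar k p = q := by
  unfold Qbar
  rw [h, map_mul, map_sub, MvPolynomial.finSuccEquiv_X_zero,
    show (2 : Fin 3) = Fin.succ 1 from rfl, MvPolynomial.finSuccEquiv_X_succ,
    Polynomial.mul_divByMonic_cancel_left _ (Polynomial.monic_X_sub_C _)]
  simp

/-- The two-term polynomial. -/
noncomputable def Q2 (a b : ℕ) (t s : k) : MvPolynomial (Fin 2) k :=
  MvPolynomial.C t * MvPolynomial.X 0 ^ a + MvPolynomial.C s * MvPolynomial.X 1 ^ b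

lemma eval2_Q2 (a b : ℕ) (t s : k) (x y : A) :
    eval2 k (Q2 k a b t s) x y = algebraMap k A t * x ^ a + algebraMap k A s * y ^ b := by
  unfold Q2
  rw [eval2_add, MvPolynomial.C_mul_X_pow_eq_monomial, MvPolynomial.C_mul_X_pow_eq_monomial,
    eval2_monomial, eval2_monomial]
  simp

lemma Qbar_one (b : ℕ) (t s : k) : Qbar k (Q2 k 1 b t s) = MvPolynomial.monomial 0 t := by
  apply Qbar_eq
  unfold Q2
  simp only [map_add, map_mul, MvPolynomial.rename_C, MvPolynomial.rename_X, map_pow]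
  rw [show (MvPolynomial.monomial 0 t : MvPolynomial (Fin 3) k) = MvPolynomial.C t from rfl]
  simp
  ring

lemma Qbar_two (b : ℕ) (t s : k) : Qbar k (Q2 k 2 b t s) =
    MvPolynomial.monomial (Finsupp.single 0 1) t + MvPolynomial.monomial (Finsupp.single 2 1) t := by
  apply Qbar_eq
  unfold Q2
  simp only [map_add, map_mul, MvPolynomial.rename_C, MvPolynomial.rename_X, map_pow]
  rw [← MvPolynomial.C_mul_X_pow_eq_monomial, ← MvPolynomial.C_mul_X_pow_eq_monomial]
  simp
  ring

lemma Qbar_zero : Qbar k (0 : MvPolynomial (Fin 2) k) = 0 := by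
  apply Qbar_eq
  simp

lemma eval3_one (b : ℕ) (t s : k) (x y z : A) :
    eval3 k (Qbar k (Q2 k 1 b t s)) x y z = algebraMap k A t := by
  rw [Qbar_one, eval3_monomial]; simp

lemma eval3_two (b : ℕ) (t s : k) (x y z : A) :
    eval3 k (Qbar k (Q2 k 2 b t s)) x y z = algebraMap k A t * x + algebraMap k A t * z := by
  rw [Qbar_two, eval3_add, eval3_monomial, eval3_monomial]; simp

/-- The shape of the `Q` polynomials. -/
structure QForm {N : ℕ} (M : Fin N → Fin N → ℤ)
    (Q : Fin N → Fin N → MvPolynomial (Fin 2) k) : Prop where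
  self : ∀ i, Q i i = 0
  orth : ∀ i j, i ≠ j → M i j = 0 → Q i j = 1
  nbr : ∀ i j, i ≠ j → M i j ≠ 0 → ∃ (t s : k) (b : ℕ), t ≠ 0 ∧ 0 < b ∧
    Q i j = Q2 k (-(M i j)).toNat b t s

lemma Q2_of_support (p : MvPolynomial (Fin 2) k) (a b : ℕ) (hb : 0 < b)
    (h : ∀ d ∈ p.support, d = Finsupp.single 0 a ∨ d = Finsupp.single 1 b) :
    p = Q2 k a b (MvPolynomial.coeff (Finsupp.single 0 a) p)
      (MvPolynomial.coeff (Finsupp.single 1 b) p) := by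
  unfold Q2
  rw [MvPolynomial.C_mul_X_pow_eq_monomial, MvPolynomial.C_mul_X_pow_eq_monomial]
  have hne : (Finsupp.single 0 a : Fin 2 →₀ ℕ) ≠ Finsupp.single 1 b := by
    intro h
    have := DFunLike.congr_fun h 1
    simp at this
    omega
  ext d
  rw [MvPolynomial.coeff_add, MvPolynomial.coeff_monomial, MvPolynomial.coeff_monomial]
  by_cases h1 : Finsupp.single 0 a = d
  · subst h1
    rw [if_pos rfl, if_neg hne.symm, add_zero]
  · rw [if_neg h1]
    by_cases h2 : Finsupp.single 1 b = d
    · subst h2; simp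
    · rw [if_neg h2, add_zero]
      by_contra hc
      rcases h d (MvPolynomial.mem_support_iff.2 hc) with h' | h'
      · exact h1 h'.symm
      · exact h2 h'.symm

lemma fin2_eq (d : Fin 2 →₀ ℕ) (a b : ℕ) (h : (d 0 = a ∧ d 1 = 0) ∨ (d 0 = 0 ∧ d 1 = b)) :
    d = Finsupp.single 0 a ∨ d = Finsupp.single 1 b := by
  rcases h with ⟨h1, h2⟩ | ⟨h1, h2⟩
  · left; ext i; fin_cases i <;> simp [h1, h2]
  · right; ext i; fin_cases i <;> simp [h1, h2]

lemma QForm_of {N : ℕ} (M : Fin N → Fin N → ℤ) (D : Fin N → ℤ)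
    (Q : Fin N → Fin N → MvPolynomial (Fin 2) k) (h : QAdmissible k M D Q)
    (hs : ∀ i j, i ≠ j → M i j ≠ 0 → ∃ b : ℕ, 0 < b ∧ ∀ p q : ℕ,
      (2 * D i) * (p : ℤ) + (2 * D j) * (q : ℤ) = -2 * (D i * M i j) →
        (p = (-(M i j)).toNat ∧ q = 0) ∨ (p = 0 ∧ q = b)) : QForm k M Q := by
  obtain ⟨h1, h2, h3, h4, h5⟩ := h
  refine ⟨h1, fun i j hij h0 => h3 i j hij (by rw [h0, mul_zero]), fun i j hij h0 => ?_⟩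
  obtain ⟨b, hb, hpq⟩ := hs i j hij h0
  refine ⟨_, _, b, h5 i j hij, hb, Q2_of_support k _ _ _ hb (fun d hd => ?_)⟩
  exact fin2_eq d _ _ (hpq _ _ (h4 i j hij d hd))

lemma QFormB {n : ℕ} (Q : Fin n → Fin n → MvPolynomial (Fin 2) k)
    (h : QAdmissible k (AB n) (dB n) Q) : QForm k (AB n) Q := by
  apply QForm_of k (AB n) (dB n) Q h
  intro i j hij hA
  have hij' : (i : ℕ) ≠ j := fun h => hij (Fin.ext h)
  rcases (show ((i : ℕ) = 0 ∧ (j : ℕ) = 1) ∨ ((i : ℕ) = 1 ∧ (j : ℕ) = 0) ∨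
      ((i : ℕ) ≠ 0 ∧ (j : ℕ) ≠ 0 ∧ ((i : ℕ) + 1 = (j : ℕ) ∨ (j : ℕ) + 1 = (i : ℕ))) by
    by_contra hc
    apply hA
    simp only [AB]
    rw [if_neg hij, if_neg (by omega), if_neg (by omega)]) with h | h | h
  · refine ⟨1, by omega, fun p q => ?_⟩
    have : AB n i j = -2 := by simp only [AB]; rw [if_neg hij, if_pos h]
    rw [this]
    simp only [dB, h]
    simp
    omega
  · refine ⟨2, by omega, fun p q => ?_⟩
    have : AB n i j = -1 := by
      simp only [AB]; rw [if_neg hij, if_neg (by omega), if_pos (by omega)]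
    rw [this]
    simp only [dB, h]
    simp
    omega
  · refine ⟨1, by omega, fun p q => ?_⟩
    have : AB n i j = -1 := by
      simp only [AB]; rw [if_neg hij, if_neg (by omega), if_pos (by omega)]
    rw [this]
    simp only [dB, h]
    simp
    omega

lemma QFormD {n : ℕ} (Q : Fin n → Fin n → MvPolynomial (Fin 2) k)
    (h : QAdmissible k (AD n) (fun _ => 1) Q) : QForm k (AD n) Q := by
  apply QForm_of k (AD n) (fun _ => 1) Q h
  intro i j hij hA
  have : AD n i j = -1 := by
    revert hA
    simp only [AD, if_neg hij]
    split_ifs <;> simp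
  rw [this]
  refine ⟨1, by omega, fun p q => ?_⟩
  simp
  omega

end Poly


/-! ### List form of the relations -/

/-- The relations in list form. -/
structure LRel (k : Type) [Field k] {N : ℕ} {R : Type} [Ring R] [Algebra k R]
    (Q : Fin N → Fin N → MvPolynomial (Fin 2) k) (Λ : Fin N → ℤ) (m : ℕ)
    (e : List (Fin N) → R) (x t : ℕ → R) : Prop where
  e_len : ∀ L, L.length ≠ m → e L = 0
  x_len : ∀ p, m ≤ p → x p = 0
  t_len : ∀ p, m ≤ p + 1 → t p = 0
  e_orth : ∀ L L', L ≠ L' → e L * e L' = 0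
  e_idem : ∀ L, e L * e L = e L
  xe : ∀ p L, x p * e L = e L * x p
  te : ∀ u i j w, t u.length * e (u ++ i :: j :: w) = e (u ++ j :: i :: w) * t u.length
  tt : ∀ a b, a + 1 < b → t a * t b = t b * t a
  tsq : ∀ u i j w, t u.length * t u.length * e (u ++ i :: j :: w) =
    eval2 k (Q i j) (x u.length) (x (u.length + 1)) * e (u ++ i :: j :: w)
  tx_left : ∀ u i w, t u.length * x u.length * e (u ++ i :: i :: w) =
    x (u.length + 1) * t u.length * e (u ++ i :: i :: w) - e (u ++ i :: i :: w)
  tx_right : ∀ u i w, t u.length * x (u.length + 1) * e (u ++ i :: i :: w) =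
    x u.length * t u.length * e (u ++ i :: i :: w) + e (u ++ i :: i :: w)
  tx_ne : ∀ u i j w, i ≠ j → t u.length * x (u.length + 1) * e (u ++ i :: j :: w) =
    x u.length * t u.length * e (u ++ i :: j :: w)
  tx_ne' : ∀ u i j w, i ≠ j → t u.length * x u.length * e (u ++ i :: j :: w) =
    x (u.length + 1) * t u.length * e (u ++ i :: j :: w)
  tx_far : ∀ p q L, q ≠ p → q ≠ p + 1 → t p * x q * e L = x q * t p * e L
  braid_ne : ∀ u i j l w, i ≠ l →
    t (u.length + 1) * t u.length * t (u.length + 1) * e (u ++ i :: j :: l :: w) =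
    t u.length * t (u.length + 1) * t u.length * e (u ++ i :: j :: l :: w)
  braid_eq : ∀ u i j w,
    t (u.length + 1) * t u.length * t (u.length + 1) * e (u ++ i :: j :: i :: w) =
    t u.length * t (u.length + 1) * t u.length * e (u ++ i :: j :: i :: w) +
    eval3 k (Qbar k (Q i j)) (x u.length) (x (u.length + 1)) (x (u.length + 2)) *
      e (u ++ i :: j :: i :: w)
  cyc : ∀ u i, x u.length ^ (Λ i).toNat * e (u ++ [i]) = 0

section LRelProof

variable (k : Type) [Field k] {N m : ℕ}

lemma map_eval2 {A B : Type} [Ring A] [Algebra k A] [Ring B] [Algebra k B] (f : A →ₐ[k] B)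
    (p : MvPolynomial (Fin 2) k) (a b : A) :
    f (eval2 k p a b) = eval2 k p (f a) (f b) := by
  simp [eval2, map_sum]

lemma map_eval3 {A B : Type} [Ring A] [Algebra k A] [Ring B] [Algebra k B] (f : A →ₐ[k] B)
    (p : MvPolynomial (Fin 3) k) (a b c : A) :
    f (eval3 k p a b c) = eval3 k p (f a) (f b) (f c) := by
  simp [eval3, map_sum]

/-- The sequence of a list. -/
def seqOf (L : List (Fin N)) (h : L.length = m) : Fin m → Fin N :=
  fun p => L[p.val]'(by rw [h]; exact p.2)

lemma seqOf_swap (u : List (Fin N)) (i j : Fin N) (w : List (Fin N))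
    (h : (u ++ i :: j :: w).length = m) (h' : (u ++ j :: i :: w).length = m)
    (hl : u.length + 1 < m) :
    swapSeq u.length hl (seqOf (u ++ i :: j :: w) h) = seqOf (u ++ j :: i :: w) h' := by
  funext p
  show seqOf (u ++ i :: j :: w) h (posSwap u.length hl p) = _
  by_cases h1 : p = ⟨u.length, by omega⟩
  · subst h1
    rw [posSwap, Equiv.swap_apply_left]
    simp [seqOf]
  · by_cases h2 : p = ⟨u.length + 1, hl⟩
    · subst h2
      rw [posSwap, Equiv.swap_apply_right]
      simp [seqOf]
    · rw [posSwap, Equiv.swap_apply_of_ne_of_ne h1 h2]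
      have h1' : p.val ≠ u.length := fun h => h1 (Fin.ext h)
      have h2' : p.val ≠ u.length + 1 := fun h => h2 (Fin.ext h)
      by_cases h3 : p.val < u.length
      · simp [seqOf, List.getElem_append, h3]
      · obtain ⟨q, hq⟩ : ∃ q, p.val = u.length + (q + 2) := ⟨p.val - u.length - 2, by omega⟩
        simp [seqOf, hq, List.getElem_append]

variable {R : Type} [Ring R] [Algebra k R] (φ : FA k N m →ₐ[k] R)

/-- idempotents in list form -/
noncomputable def eL (L : List (Fin N)) : R :=
  if h : L.length = m then φ (Eg k (seqOf L h)) else 0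

/-- x in list form -/
noncomputable def xL (p : ℕ) : R := if h : p < m then φ (Xg k ⟨p, h⟩) else 0

/-- t in list form -/
noncomputable def tL (p : ℕ) : R := if h : p + 1 < m then φ (Tg k p h) else 0

lemma eL_pos (L : List (Fin N)) (h : L.length = m) : eL k φ L = φ (Eg k (seqOf L h)) :=
  dif_pos h

lemma xL_pos (p : ℕ) (h : p < m) : xL k φ p = φ (Xg k ⟨p, h⟩) := dif_pos h

lemma tL_pos (p : ℕ) (h : p + 1 < m) : tL k φ p = φ (Tg k p h) := dif_pos h

lemma seqOf_ofFn (ν : Fin m → Fin N) : seqOf (List.ofFn ν) (List.length_ofFn) = ν := by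
  funext p
  simp [seqOf]

lemma eL_ofFn (ν : Fin m → Fin N) : eL k φ (List.ofFn ν) = φ (Eg k ν) := by
  rw [eL_pos k φ _ List.length_ofFn, seqOf_ofFn]

lemma seqOf_0 (u : List (Fin N)) (i : Fin N) (w : List (Fin N))
    (h : (u ++ i :: w).length = m) (h' : u.length < m) :
    seqOf (u ++ i :: w) h ⟨u.length, h'⟩ = i := by simp [seqOf]

lemma seqOf_1 (u : List (Fin N)) (i j : Fin N) (w : List (Fin N))
    (h : (u ++ i :: j :: w).length = m) (h' : u.length + 1 < m) :
    seqOf (u ++ i :: j :: w) h ⟨u.length + 1, h'⟩ = j := by simp [seqOf, List.getElem_append]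

lemma seqOf_2 (u : List (Fin N)) (i j l : Fin N) (w : List (Fin N))
    (h : (u ++ i :: j :: l :: w).length = m) (h' : u.length + 2 < m) :
    seqOf (u ++ i :: j :: l :: w) h ⟨u.length + 2, h'⟩ = l := by
  simp [seqOf, List.getElem_append]

lemma LRel_of (Q : Fin N → Fin N → MvPolynomial (Fin 2) k) (Λ : Fin N → ℤ)
    (hφ : ∀ a b, CRel k Q (Set.univ : Set (Fin m → Fin N)) Λ a b → φ a = φ b) :
    LRel k Q Λ m (eL k φ) (xL k φ) (tL k φ) where
  e_len L h := dif_neg h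
  x_len p h := dif_neg (by omega)
  t_len p h := dif_neg (by omega)
  e_orth L L' h := by
    by_cases h1 : L.length = m
    · by_cases h2 : L'.length = m
      · rw [eL_pos k φ _ h1, eL_pos k φ _ h2, ← map_mul, hφ _ 0 (Or.inl (Rel.e_orth _ _ ?_)),
          map_zero]
        intro hc
        apply h
        apply List.ext_getElem (by omega)
        intro p hp hp'
        exact congrFun hc ⟨p, by omega⟩
      · rw [eL, eL, dif_neg h2, mul_zero]
    · rw [eL, dif_neg h1, zero_mul]
  e_idem L := by
    by_cases h1 : L.length = m
    · rw [eL_pos k φ _ h1, ← map_mul, hφ _ _ (Or.inl (Rel.e_idem _))]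
    · rw [eL, dif_neg h1, zero_mul]
  xe p L := by
    by_cases h1 : L.length = m
    · by_cases hp : p < m
      · rw [eL_pos k φ _ h1, xL_pos k φ _ hp, ← map_mul, hφ _ _ (Or.inl (Rel.xe _ _)), map_mul]
      · rw [xL, dif_neg hp]; simp
    · rw [eL, dif_neg h1]; simp
  te u i j w := by
    by_cases h1 : (u ++ i :: j :: w).length = m
    · have h2 : (u ++ j :: i :: w).length = m := by simpa using h1
      have hl : u.length + 1 < m := by simp at h1; omega
      rw [eL_pos k φ _ h1, eL_pos k φ _ h2, tL_pos k φ _ hl, ← map_mul,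
        hφ _ _ (Or.inl (Rel.te _ _ _)), map_mul, seqOf_swap u i j w h1 h2 hl]
    · have h2 : ¬ (u ++ j :: i :: w).length = m := by simpa using h1
      rw [eL, dif_neg h1, eL, dif_neg h2]; simp
  tt a b h := by
    by_cases hb : b + 1 < m
    · have ha : a + 1 < m := by omega
      rw [tL_pos k φ _ ha, tL_pos k φ _ hb, ← map_mul, ← map_mul]
      exact hφ _ _ (Or.inl (Rel.tt _ _ _ _ (Or.inl h)))
    · have : tL k φ b = 0 := dif_neg hb
      rw [this]; simp
  tsq u i j w := by
    by_cases h1 : (u ++ i :: j :: w).length = m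
    · have hl : u.length + 1 < m := by simp at h1; omega
      have := hφ _ _ (Or.inl (Rel.tsq _ hl (seqOf _ h1)))
      rw [seqOf_0 u i _ h1, seqOf_1 u i j w h1] at this
      simp only [map_mul, map_eval2] at this
      rw [eL_pos k φ _ h1, tL_pos k φ _ hl, xL_pos k φ _ hl, xL_pos k φ _ (by omega)]
      exact this
    · rw [eL, dif_neg h1]; simp
  tx_left u i w := by
    by_cases h1 : (u ++ i :: i :: w).length = m
    · have hl : u.length + 1 < m := by simp at h1; omega
      have := hφ _ _ (Or.inl (Rel.tx_left _ hl (seqOf _ h1)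
        (by rw [seqOf_0 u i _ h1, seqOf_1 u i i w h1])))
      simp only [map_mul, map_sub] at this
      rw [eL_pos k φ _ h1, tL_pos k φ _ hl, xL_pos k φ _ hl, xL_pos k φ _ (by omega)]
      exact this
    · rw [eL, dif_neg h1]; simp
  tx_right u i w := by
    by_cases h1 : (u ++ i :: i :: w).length = m
    · have hl : u.length + 1 < m := by simp at h1; omega
      have := hφ _ _ (Or.inl (Rel.tx_right _ hl (seqOf _ h1)
        (by rw [seqOf_0 u i _ h1, seqOf_1 u i i w h1])))
      simp only [map_mul, map_add] at this
      rw [eL_pos k φ _ h1, tL_pos k φ _ hl, xL_pos k φ _ hl, xL_pos k φ _ (by omega)]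
      exact this
    · rw [eL, dif_neg h1]; simp
  tx_ne u i j w hij := by
    by_cases h1 : (u ++ i :: j :: w).length = m
    · have hl : u.length + 1 < m := by simp at h1; omega
      have := hφ _ _ (Or.inl (Rel.tx_comm _ hl (seqOf _ h1) ⟨u.length + 1, hl⟩
        (Or.inl (by rw [seqOf_0 u i _ h1, seqOf_1 u i j w h1]; exact hij))))
      simp only [map_mul, posSwap, Equiv.swap_apply_right] at this
      rw [eL_pos k φ _ h1, tL_pos k φ _ hl, xL_pos k φ _ hl, xL_pos k φ _ (by omega)]
      exact this
    · rw [eL, dif_neg h1]; simp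
  tx_ne' u i j w hij := by
    by_cases h1 : (u ++ i :: j :: w).length = m
    · have hl : u.length + 1 < m := by simp at h1; omega
      have := hφ _ _ (Or.inl (Rel.tx_comm _ hl (seqOf _ h1) ⟨u.length, by omega⟩
        (Or.inl (by rw [seqOf_0 u i _ h1, seqOf_1 u i j w h1]; exact hij))))
      simp only [map_mul, posSwap, Equiv.swap_apply_left] at this
      rw [eL_pos k φ _ h1, tL_pos k φ _ hl, xL_pos k φ _ hl, xL_pos k φ _ (by omega)]
      exact this
    · rw [eL, dif_neg h1]; simp
  tx_far p q L h1 h2 := by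
    by_cases hL : L.length = m
    · by_cases hp : p + 1 < m
      · by_cases hq : q < m
        · have := hφ _ _ (Or.inl (Rel.tx_comm p hp (seqOf _ hL) ⟨q, hq⟩ (Or.inr ⟨h1, h2⟩)))
          rw [posSwap, Equiv.swap_apply_of_ne_of_ne (by simpa using h1) (by simpa using h2)]
            at this
          simp only [map_mul] at this
          rw [eL_pos k φ _ hL, tL_pos k φ _ hp, xL_pos k φ _ hq]
          exact this
        · have : xL k φ q = 0 := dif_neg hq
          rw [this]; simp
      · have : tL k φ p = 0 := dif_neg hp
        rw [this]; simp
    · rw [eL, dif_neg hL]; simp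
  braid_ne u i j l w hil := by
    by_cases h1 : (u ++ i :: j :: l :: w).length = m
    · have hl : u.length + 2 < m := by simp at h1; omega
      have := hφ _ _ (Or.inl (Rel.braid_ne u.length (by omega) hl (seqOf _ h1)
        (by rw [seqOf_0 u i _ h1, seqOf_2 u i j l w h1]; exact hil)))
      simp only [map_mul] at this
      rw [eL_pos k φ _ h1, tL_pos k φ u.length (by omega), tL_pos k φ (u.length + 1) (by omega)]
      exact this
    · rw [eL, dif_neg h1]; simp
  braid_eq u i j w := by
    by_cases h1 : (u ++ i :: j :: i :: w).length = m
    · have hl : u.length + 2 < m := by simp at h1; omega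
      have := hφ _ _ (Or.inl (Rel.braid_eq u.length (by omega) hl (seqOf _ h1)
        (by rw [seqOf_0 u i _ h1, seqOf_2 u i j i w h1])))
      rw [seqOf_0 u i _ h1, seqOf_1 u i j _ h1] at this
      simp only [map_mul, map_add, map_eval3] at this
      rw [eL_pos k φ _ h1, tL_pos k φ u.length (by omega), tL_pos k φ (u.length + 1) (by omega),
        xL_pos k φ u.length (by omega), xL_pos k φ (u.length + 1) (by omega),
        xL_pos k φ (u.length + 2) (by omega)]
      exact this
    · rw [eL, dif_neg h1]; simp
  cyc u i := by
    by_cases h1 : (u ++ [i]).length = m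
    · have hl : u.length + 1 = m := by simpa using h1
      have := hφ _ _ (Or.inr (CycRel.cyc (seqOf _ h1) (Set.mem_univ _) ⟨u.length, by omega⟩ hl))
      rw [seqOf_0 u i _ h1] at this
      simp only [map_mul, map_pow, map_zero] at this
      rw [eL_pos k φ _ h1, xL_pos k φ u.length (by omega)]
      exact this
    · rw [eL, dif_neg h1]; simp

lemma eL_sum (Q : Fin N → Fin N → MvPolynomial (Fin 2) k) (Λ : Fin N → ℤ)
    (hφ : ∀ a b, CRel k Q (Set.univ : Set (Fin m → Fin N)) Λ a b → φ a = φ b) :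
    ∑ ν : Fin m → Fin N, eL k φ (List.ofFn ν) = 1 := by
  have := hφ _ _ (Or.inl Rel.e_sum)
  rw [map_sum, map_one] at this
  simpa only [eL_ofFn] using this

/-- Generation principle. -/
lemma gen_top (hs : Function.Surjective φ) (V : Submodule k R) (h1 : (1 : R) ∈ V)
    (he : ∀ L v, v ∈ V → eL k φ L * v ∈ V) (hx : ∀ p v, v ∈ V → xL k φ p * v ∈ V)
    (ht : ∀ p v, v ∈ V → tL k φ p * v ∈ V) : ∀ r : R, r ∈ V := by
  have key : ∀ a : FA k N m, ∀ v ∈ V, φ a * v ∈ V := by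
    intro a
    induction a using FreeAlgebra.induction with
    | grade0 r => intro v hv; rw [AlgHom.commutes, ← Algebra.smul_def]; exact V.smul_mem _ hv
    | grade1 g =>
      intro v hv
      cases g with
      | e ν => have := he (List.ofFn ν) v hv; rw [eL_ofFn] at this; exact this
      | x p => have := hx p v hv; rw [xL_pos k φ _ p.2] at this; exact this
      | t j h => have := ht j v hv; rw [tL_pos k φ _ h] at this; exact this
    | mul a b ha hb => intro v hv; rw [map_mul, mul_assoc]; exact ha _ (hb _ hv)
    | add a b ha hb => intro v hv; rw [map_add, add_mul]; exact V.add_mem (ha _ hv) (hb _ hv)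
  intro r
  obtain ⟨a, rfl⟩ := hs r
  simpa using key a 1 h1

end LRelProof


/-! ### Vanishing -/

section Vanish

variable {k : Type} [Field k] {N m : ℕ} {R : Type} [Ring R] [Algebra k R]
  {Q : Fin N → Fin N → MvPolynomial (Fin 2) k} {A : Fin N → Fin N → ℤ} {Λ : Fin N → ℤ}
  {e : List (Fin N) → R} {x t : ℕ → R}

/-- The idempotents ending with `w` vanish. -/
def ZZ (e : List (Fin N) → R) (w : List (Fin N)) : Prop := ∀ u, e (u ++ w) = 0

/-- The polynomial generator at the start of `w` vanishes. -/
def XX (e : List (Fin N) → R) (x : ℕ → R) (w : List (Fin N)) : Prop :=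
  ∀ u, x u.length * e (u ++ w) = 0

lemma LRel.tsq_one (H : LRel k Q Λ m e x t) (u : List (Fin N)) (a b : Fin N) (w : List (Fin N))
    (hQ : Q a b = 1) :
    t u.length * t u.length * e (u ++ a :: b :: w) = e (u ++ a :: b :: w) := by
  rw [H.tsq, hQ, eval2_one, one_mul]

lemma LRel.conj (H : LRel k Q Λ m e x t) (u : List (Fin N)) (a b : Fin N) (w : List (Fin N))
    (hQ : Q a b = 1) :
    e (u ++ a :: b :: w) = t u.length * e (u ++ b :: a :: w) * t u.length := by
  rw [mul_assoc, ← H.te, ← mul_assoc, H.tsq_one u a b w hQ]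

lemma ZZ.cons {w : List (Fin N)} (h : ZZ e w) (i : Fin N) : ZZ e (i :: w) := by
  intro u
  have := h (u ++ [i])
  simpa using this

lemma ZZ.XX {w : List (Fin N)} (h : ZZ e w) : XX e x w := by
  intro u; rw [h u, mul_zero]

lemma XX.one {w : List (Fin N)} (h : XX e x w) (i : Fin N) (u : List (Fin N)) :
    x (u.length + 1) * e (u ++ i :: w) = 0 := by
  have := h (u ++ [i])
  simpa using this

lemma LRel.swapZ (H : LRel k Q Λ m e x t) (y : List (Fin N)) (a b : Fin N) (s : List (Fin N))
    (hQ : Q a b = 1) (h : ZZ e (y ++ b :: a :: s)) : ZZ e (y ++ a :: b :: s) := by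
  intro u
  rw [← List.append_assoc, H.conj _ a b s hQ, List.append_assoc, h u]
  simp

lemma LRel.swapX (H : LRel k Q Λ m e x t) (i : Fin N) (y : List (Fin N)) (a b : Fin N)
    (s : List (Fin N))
    (hQ : Q a b = 1) (h : XX e x (i :: y ++ b :: a :: s)) : XX e x (i :: y ++ a :: b :: s) := by
  intro u
  rw [← List.append_assoc, H.conj _ a b s hQ, ← mul_assoc, ← mul_assoc,
    ← H.tx_far _ _ _ (by simp) (by simp; omega), List.append_assoc, mul_assoc (t _), h u]
  simp

lemma LRel.slideX (H : LRel k Q Λ m e x t) (a b : Fin N)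
    (s : List (Fin N)) (hab : b ≠ a)
    (hQ : Q a b = 1) (h : XX e x (a :: s)) : XX e x (a :: b :: s) := by
  intro u
  rw [H.conj _ a b s hQ, ← mul_assoc, ← mul_assoc, ← H.tx_ne _ _ _ _ hab, mul_assoc (t _),
    h.one]
  simp

lemma LRel.L2 (H : LRel k Q Λ m e x t) (i : Fin N) (w : List (Fin N)) (hQ : Q i i = 0)
    (h : XX e x (i :: w)) : ZZ e (i :: i :: w) := by
  intro u
  have h1 := H.tx_right u i w
  rw [mul_assoc, h.one, mul_zero] at h1
  have h2 := H.tsq u i i w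
  rw [hQ, eval2_zero, zero_mul] at h2
  have h3 := H.te u i i w
  have h4 : e (u ++ i :: i :: w) = - (x u.length * t u.length * e (u ++ i :: i :: w)) :=
    (neg_eq_of_add_eq_zero_right h1.symm).symm
  have h5 : e (u ++ i :: i :: w) * t u.length = 0 := by
    rw [h4, neg_mul, mul_assoc, ← h3, mul_assoc, ← mul_assoc (t _), h2, mul_zero, neg_zero]
  rw [h4, mul_assoc, h3, h5, mul_zero, neg_zero]

lemma LRel.L3 (H : LRel k Q Λ m e x t) (i j : Fin N) (w : List (Fin N)) (a b : ℕ) (c d : k)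
    (hc : c ≠ 0) (hb : 0 < b)
    (hQ : Q i j = Q2 k a b c d) (hj : XX e x (j :: w)) (hi : ZZ e (i :: w)) (u : List (Fin N)) :
    x u.length ^ a * e (u ++ i :: j :: w) = 0 := by
  have h1 := H.tsq u i j w
  have h2 := hi (u ++ [j])
  rw [List.append_assoc, List.singleton_append] at h2
  obtain ⟨b, rfl⟩ : ∃ b', b = b' + 1 := ⟨b - 1, by omega⟩
  rw [mul_assoc, H.te, h2, hQ, eval2_Q2, add_mul, pow_succ, mul_assoc _ (_ * _),
    mul_assoc _ (x (u.length + 1)), hj.one] at h1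
  simp only [zero_mul, mul_zero, add_zero] at h1
  rw [mul_assoc, ← Algebra.smul_def] at h1
  exact (smul_eq_zero.1 h1.symm).resolve_left hc

lemma LRel.L45 (H : LRel k Q Λ m e x t) (i j : Fin N) (w : List (Fin N))
    (h1 : ZZ e (i :: i :: j :: w)) (h2 : ZZ e (i :: i :: w)) (u : List (Fin N)) :
    eval3 k (Qbar k (Q i j)) (x u.length) (x (u.length + 1)) (x (u.length + 2)) *
      e (u ++ i :: j :: i :: w) = 0 := by
  have h := H.braid_eq u i j w
  have h3 := H.te (u ++ [i]) j i w
  have h4 := H.te u i j (i :: w)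
  have h5 := h2 (u ++ [j])
  simp only [List.append_assoc, List.singleton_append, List.length_append,
    List.length_singleton] at h3 h5
  rw [h1 u, zero_mul] at h3
  rw [h5, zero_mul] at h4
  rw [mul_assoc, h3, mul_assoc (_ * _), h4] at h
  simpa using h.symm

lemma LRel.L4 (H : LRel k Q Λ m e x t) (i j : Fin N) (w : List (Fin N)) (b : ℕ) (c d : k)
    (hc : c ≠ 0) (hQ : Q i j = Q2 k 1 b c d)
    (h1 : ZZ e (i :: i :: j :: w)) (h2 : ZZ e (i :: i :: w)) : ZZ e (i :: j :: i :: w) := by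
  intro u
  have := H.L45 i j w h1 h2 u
  rw [hQ, eval3_one, ← Algebra.smul_def] at this
  exact (smul_eq_zero.1 this).resolve_left hc

lemma LRel.L5 (H : LRel k Q Λ m e x t) (i j : Fin N) (w : List (Fin N)) (b : ℕ) (c d : k)
    (hc : c ≠ 0) (hQ : Q i j = Q2 k 2 b c d) (hX : XX e x (i :: w))
    (h1 : ZZ e (i :: i :: j :: w)) (h2 : ZZ e (i :: i :: w)) : XX e x (i :: j :: i :: w) := by
  intro u
  have := H.L45 i j w h1 h2 u
  have h3 := hX (u ++ [i, j])
  simp only [List.append_assoc, List.cons_append, List.nil_append, List.length_append,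
    List.length_cons, List.length_nil, zero_add, Nat.reduceAdd] at h3
  rw [hQ, eval3_two, add_mul, mul_assoc, mul_assoc, h3, mul_zero, add_zero,
    ← Algebra.smul_def] at this
  exact (smul_eq_zero.1 this).resolve_left hc

lemma split_at (A : Fin N → Fin N → ℤ) (i : Fin N) (w : List (Fin N)) :
    ∃ v r, w = v ++ r ∧ (∀ c ∈ v, A i c = 0) ∧ (r = [] ∨ ∃ j w', r = j :: w' ∧ A i j ≠ 0) := by
  induction w with
  | nil => exact ⟨[], [], rfl, by simp, Or.inl rfl⟩
  | cons c w ih =>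
    by_cases h : A i c = 0
    · obtain ⟨v, r, rfl, h1, h2⟩ := ih
      refine ⟨c :: v, r, rfl, ?_, h2⟩
      intro d hd
      rcases List.mem_cons.1 hd with rfl | hd
      · exact h
      · exact h1 d hd
    · exact ⟨[], c :: w, rfl, by simp, Or.inr ⟨c, w, rfl, h⟩⟩

lemma wt_orth (i : Fin N) (v r : List (Fin N)) (h : ∀ c ∈ v, A i c = 0) :
    wt A Λ (v ++ r) i = wt A Λ r i := by
  induction v with
  | nil => rfl
  | cons c v ih =>
    show wt A Λ (v ++ r) i - A i c = _
    rw [h c (by simp), sub_zero, ih (fun d hd => h d (by simp [hd]))]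

lemma MPath_suffix (v r : List (Fin N)) (h : MPath A Λ (v ++ r)) : MPath A Λ r := by
  induction v with
  | nil => exact h
  | cons c v ih => exact ih h.1

lemma split_neg (hG : Good A Λ) (i : Fin N) (w : List (Fin N)) (hw : MPath A Λ w)
    (h : wt A Λ w i = -1) : ∃ v r, w = v ++ i :: r ∧ (∀ c ∈ v, A i c = 0) := by
  obtain ⟨v, r, rfl, hv, hr⟩ := split_at A i w
  rw [wt_orth i v r hv] at h
  have hr' := MPath_suffix v r hw
  rcases hr with rfl | ⟨j, w', rfl, hj⟩
  · have : Λ i = -1 := h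
    rcases hG.fund i with h' | h' <;> omega
  · by_cases hij : i = j
    · subst hij
      exact ⟨v, w', rfl, hv⟩
    · have h1 : wt A Λ w' i - A i j = -1 := h
      have h2 := (hG.range w' hr'.1 i).1
      rcases hG.off i j hij with h' | h' | h' <;> omega

lemma LRel.moveZ (H : LRel k Q Λ m e x t) (i : Fin N) (v : List (Fin N))
    (hv : ∀ c ∈ v, Q c i = 1) (y r : List (Fin N))
    (h : ZZ e (y ++ i :: (v ++ r))) : ZZ e (y ++ (v ++ i :: r)) := by
  induction v generalizing y with
  | nil => exact h
  | cons c v ih =>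
    have := ih (fun d hd => hv d (by simp [hd])) (y ++ [c])
    simp only [List.append_assoc, List.singleton_append] at this
    exact this (H.swapZ y c i (v ++ r) (hv c (by simp)) h)

lemma LRel.moveX (H : LRel k Q Λ m e x t) (i : Fin N) (v : List (Fin N))
    (hv : ∀ c ∈ v, Q c i = 1) (l : Fin N) (y r : List (Fin N))
    (h : XX e x (l :: y ++ i :: (v ++ r))) : XX e x (l :: y ++ (v ++ i :: r)) := by
  induction v generalizing y with
  | nil => exact h
  | cons c v ih =>
    have := ih (fun d hd => hv d (by simp [hd])) (y ++ [c])
    simp only [List.append_assoc, List.singleton_append, List.cons_append] at this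
    exact this (H.swapX l y c i (v ++ r) (hv c (by simp)) h)

lemma LRel.frontZ (H : LRel k Q Λ m e x t) (i : Fin N) (v : List (Fin N))
    (hv : ∀ c ∈ v, Q i c = 1) (r : List (Fin N))
    (h : ZZ e (i :: r)) : ZZ e (i :: (v ++ r)) := by
  induction v with
  | nil => exact h
  | cons c v ih =>
    exact H.swapZ [] i c _ (hv c (by simp)) ((ih (fun d hd => hv d (by simp [hd]))).cons c)

lemma LRel.frontX (H : LRel k Q Λ m e x t) (i : Fin N) (v : List (Fin N))
    (hv : ∀ c ∈ v, c ≠ i ∧ Q i c = 1) (r : List (Fin N))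
    (h : XX e x (i :: r)) : XX e x (i :: (v ++ r)) := by
  induction v with
  | nil => exact h
  | cons c v ih =>
    exact H.slideX i c _ (hv c (by simp)).1 (hv c (by simp)).2
      (ih (fun d hd => hv d (by simp [hd])))

lemma Good.ne (hG : Good A Λ) {i j : Fin N} (h : A i j = 0) : i ≠ j := by
  rintro rfl
  have := hG.diag i
  omega

theorem vanish (hG : Good A Λ) (hQ : QForm k A Q) (H : LRel k Q Λ m e x t) :
    ∀ (n : ℕ) (w : List (Fin N)), w.length = n → XX e x w ∧ (¬ MPath A Λ w → ZZ e w) := by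
  intro n
  induction n using Nat.strong_induction_on with
  | _ n IH =>
  intro w hwn
  cases w with
  | nil =>
    refine ⟨fun u => ?_, fun h => absurd trivial h⟩
    rw [List.append_nil]
    by_cases hu : u.length = m
    · rw [H.x_len _ hu.ge, zero_mul]
    · rw [H.e_len _ hu, mul_zero]
  | cons i w =>
  have hIH : ∀ w' : List (Fin N), w'.length ≤ w.length →
      XX e x w' ∧ (¬ MPath A Λ w' → ZZ e w') := by
    intro w' hw'
    simp only [List.length_cons] at hwn
    exact IH w'.length (by omega) w' rfl
  by_cases hw : MPath A Λ w
  swap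
  · have := ((hIH w le_rfl).2 hw).cons i
    exact ⟨this.XX, fun _ => this⟩
  suffices hs : XX e x (i :: w) ∧ (wt A Λ w i ≠ 1 → ZZ e (i :: w)) from
    ⟨hs.1, fun h => hs.2 (fun h' => h ⟨hw, h'⟩)⟩
  obtain ⟨v, r, rfl, hv, hr⟩ := split_at A i w
  rw [wt_orth i v r hv]
  have hvQ : ∀ c ∈ v, c ≠ i ∧ Q i c = 1 := fun c hc =>
    ⟨(hG.ne (hv c hc)).symm, hQ.orth i c (hG.ne (hv c hc)) (hv c hc)⟩
  have hrp := MPath_suffix v r hw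
  suffices hs : XX e x (i :: r) ∧ (wt A Λ r i ≠ 1 → ZZ e (i :: r)) from
    ⟨H.frontX i v hvQ r hs.1, fun h => H.frontZ i v (fun c hc => (hvQ c hc).2) r (hs.2 h)⟩
  have hIH : ∀ w' : List (Fin N), w'.length ≤ r.length →
      XX e x w' ∧ (¬ MPath A Λ w' → ZZ e w') := by
    intro w' hw'
    apply hIH
    simp; omega
  clear IH hwn
  rcases hr with rfl | ⟨j, w', rfl, hj⟩
  · have hc := fun u => H.cyc u i
    rcases hG.fund i with h' | h'
    · rw [h'] at hc
      have hz : ZZ e [i] := fun u => by simpa using hc u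
      exact ⟨hz.XX, fun _ => hz⟩
    · refine ⟨fun u => ?_, fun h => absurd h' h⟩
      rw [h'] at hc
      simpa using hc u
  by_cases hij : i = j
  · subst hij
    have hz := H.L2 i w' (hQ.self i) (hIH (i :: w') (by simp)).1
    exact ⟨hz.XX, fun _ => hz⟩
  have hZi : ZZ e (i :: w') := (hIH (i :: w') (by simp)).2
    (fun h => hG.nbr w' hrp.1 i j hij hj h.2 hrp.2)
  have hXj : XX e x (j :: w') := (hIH (j :: w') (by simp)).1
  have hi1 : wt A Λ w' i ≠ 1 := fun h => hG.nbr w' hrp.1 i j hij hj h hrp.2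
  have hwt : wt A Λ (j :: w') i = wt A Λ w' i - A i j := rfl
  have hrg := hG.range w' hrp.1 i
  have hrg2 := hG.range (j :: w') hrp i
  obtain ⟨c, d, b, hc, hb, hQij⟩ := hQ.nbr i j hij hj
  have hL3 := H.L3 i j w' _ b c d hc hb hQij hXj hZi
  -- the letter i can be moved to the left when the weight is -1
  have hsp : wt A Λ w' i = -1 → ∃ v r, w' = v ++ i :: r ∧ (∀ c ∈ v, Q c i = 1) ∧
      ZZ e (i :: i :: j :: (v ++ r)) ∧ ZZ e (i :: i :: (v ++ r)) ∧ XX e x (i :: (v ++ r)) := by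
    intro h
    obtain ⟨v', r', rfl, hv'⟩ := split_neg hG i w' hrp.1 h
    refine ⟨v', r', rfl, fun c hc => ?_, H.L2 _ _ (hQ.self i) (hIH _ ?_).1,
      H.L2 _ _ (hQ.self i) (hIH _ ?_).1, (hIH _ ?_).1⟩
    · exact hQ.orth _ _ (hG.ne (hv' c hc)).symm (hG.sym _ _ (hv' c hc))
    all_goals simp
  rcases hG.off i j hij with h0 | h1 | h2
  · exact absurd h0 hj
  · rw [h1] at hL3 hQij
    refine ⟨fun u => by simpa using hL3 u, fun h => ?_⟩
    obtain ⟨v', r', rfl, hv', hz1, hz2, hx⟩ := hsp (by omega)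
    exact H.moveZ i v' hv' [i, j] r' (H.L4 i j _ b c d hc hQij hz1 hz2)
  · rw [h2] at hQij
    refine ⟨?_, fun h => absurd ?_ h⟩
    · obtain ⟨v', r', rfl, hv', hz1, hz2, hx⟩ := hsp (by omega)
      exact H.moveX i v' hv' i [j] r' (H.L5 i j _ b c d hc hQij hx hz1 hz2)
    · omega

lemma LRel.x_zero (hG : Good A Λ) (hQ : QForm k A Q) (H : LRel k Q Λ m e x t) (p : ℕ)
    (L : List (Fin N)) : x p * e L = 0 := by
  by_cases hL : L.length = m
  · by_cases hp : p < m
    · have := (vanish hG hQ H _ (L.drop p) rfl).1 (L.take p)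
      rw [List.take_append_drop, List.length_take, min_eq_left (by omega)] at this
      exact this
    · rw [H.x_len _ (by omega), zero_mul]
  · rw [H.e_len _ hL, mul_zero]

lemma LRel.e_zero (hG : Good A Λ) (hQ : QForm k A Q) (H : LRel k Q Λ m e x t)
    (L : List (Fin N)) (hL : ¬ MPath A Λ L) : e L = 0 := (vanish hG hQ H _ L rfl).2 hL []

end Vanish


/-! ### Upper bound -/

/-- The reduced relations. -/
structure NRel {N : ℕ} {R : Type} [Ring R] (A : Fin N → Fin N → ℤ) (Λ : Fin N → ℤ) (m : ℕ)
    (e : List (Fin N) → R) (t : ℕ → R) : Prop where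
  e_len : ∀ L, L.length ≠ m → e L = 0
  e_path : ∀ L, ¬ MPath A Λ L → e L = 0
  t_len : ∀ p, m ≤ p + 1 → t p = 0
  e_orth : ∀ L L', L ≠ L' → e L * e L' = 0
  e_idem : ∀ L, e L * e L = e L
  te : ∀ u i j w, t u.length * e (u ++ i :: j :: w) = e (u ++ j :: i :: w) * t u.length
  tt : ∀ a b, a + 1 < b → t a * t b = t b * t a
  tz : ∀ u i j w, A i j ≠ 0 → t u.length * e (u ++ i :: j :: w) = 0
  tsq : ∀ u i j w, A i j = 0 → t u.length * t u.length * e (u ++ i :: j :: w) =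
    e (u ++ i :: j :: w)
  braid : ∀ p, t (p + 1) * t p * t (p + 1) = t p * t (p + 1) * t p

section Upper

lemma split2 {N : ℕ} (L : List (Fin N)) (p : ℕ) (h : p + 1 < L.length) :
    ∃ u i j w, L = u ++ i :: j :: w ∧ u.length = p := by
  refine ⟨L.take p, L[p], L[p+1], L.drop (p + 2), ?_, by simp; omega⟩
  rw [← List.drop_eq_getElem_cons, ← List.drop_eq_getElem_cons, List.take_append_drop]

lemma split3 {N : ℕ} (L : List (Fin N)) (p : ℕ) (h : p + 2 < L.length) :
    ∃ u i j l w, L = u ++ i :: j :: l :: w ∧ u.length = p := by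
  refine ⟨L.take p, L[p], L[p+1], L[p+2], L.drop (p + 3), ?_, by simp; omega⟩
  rw [← List.drop_eq_getElem_cons, ← List.drop_eq_getElem_cons, ← List.drop_eq_getElem_cons,
    List.take_append_drop]

lemma MPath_nbr {N : ℕ} {A : Fin N → Fin N → ℤ} {Λ : Fin N → ℤ} (hG : Good A Λ)
    (u : List (Fin N)) (i j : Fin N) (w : List (Fin N)) (hij : A i j ≠ 0)
    (h1 : MPath A Λ (u ++ i :: j :: w)) (h2 : MPath A Λ (u ++ j :: i :: w)) : False := by
  have h1' := MPath_suffix _ _ h1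
  have h2' := MPath_suffix _ _ h2
  by_cases h : i = j
  · subst h
    have a : wt A Λ w i - A i i = 1 := h1'.2
    have b : wt A Λ w i = 1 := h1'.1.2
    have := hG.diag i
    omega
  · exact hG.nbr w h1'.1.1 i j h hij h2'.1.2 h1'.1.2

variable {k : Type} [Field k] {N m : ℕ} {R : Type} [Ring R] [Algebra k R]
  {Q : Fin N → Fin N → MvPolynomial (Fin 2) k} {A : Fin N → Fin N → ℤ} {Λ : Fin N → ℤ}
  {e : List (Fin N) → R} {x t : ℕ → R}

lemma NRel_of (hG : Good A Λ) (hQ : QForm k A Q) (H : LRel k Q Λ m e x t)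
    (hsum : ∑ ν : Fin m → Fin N, e (List.ofFn ν) = 1) : NRel A Λ m e t := by
  have tz : ∀ u i j w, A i j ≠ 0 → t u.length * e (u ++ i :: j :: w) = 0 := by
    intro u i j w hij
    by_cases h1 : MPath A Λ (u ++ i :: j :: w)
    · rw [H.te, H.e_zero hG hQ _ (fun h2 => MPath_nbr hG u i j w hij h1 h2), zero_mul]
    · rw [H.e_zero hG hQ _ h1, mul_zero]
  refine ⟨H.e_len, fun L => H.e_zero hG hQ L, H.t_len, H.e_orth, H.e_idem, H.te, H.tt, tz,
    fun u i j w hij => H.tsq_one u i j w (hQ.orth i j (hG.ne hij) hij), ?_⟩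
  intro p
  by_cases hp : m ≤ p + 1 + 1
  · rw [H.t_len _ hp]; simp
  rw [← mul_one (t (p + 1) * t p * t (p + 1)), ← mul_one (t p * t (p + 1) * t p), ← hsum,
    Finset.mul_sum, Finset.mul_sum]
  apply Finset.sum_congr rfl
  intro ν _
  obtain ⟨u, i, j, l, w, hL, rfl⟩ := split3 (List.ofFn ν) p (by simp; omega)
  rw [hL]
  by_cases hil : i = l
  swap
  · exact H.braid_ne u i j l w hil
  subst hil
  by_cases hij : A i j = 0
  · rw [H.e_zero hG hQ]
    · simp
    · intro h
      have h := MPath_suffix _ _ h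
      have h1 : wt A Λ w i = 1 := h.1.1.2
      have h2 : wt A Λ w i - A i i - A i j = 1 := h.2
      have := hG.diag i
      omega
  · have h1 := tz u i j (i :: w) hij
    have h2 := tz (u ++ [i]) j i w (fun h => hij (hG.sym _ _ h))
    simp only [List.append_assoc, List.singleton_append, List.length_append,
      List.length_singleton] at h2
    rw [mul_assoc, h2, mul_assoc (_ * _), h1]; simp

/-- The word monomial. -/
def W (t : ℕ → R) (l : List ℕ) : R := (l.map t).prod

lemma W_cons (j : ℕ) (l : List ℕ) : W t (j :: l) = t j * W t l := by simp [W]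

/-- Descending products. -/
def CC (t : ℕ → R) (r : ℕ) : ℕ → R
  | 0 => 1
  | a + 1 => t (r + a) * CC t r a

lemma NRel.Cfar (H : NRel A Λ m e t) (r a j : ℕ) (h : r + a + 1 ≤ j) :
    t j * CC t r a = CC t r a * t j := by
  induction a with
  | zero => simp [CC]
  | succ a ih =>
    simp only [CC]
    rw [← mul_assoc, ← H.tt (r + a) j (by omega), mul_assoc, ih (by omega), mul_assoc]

lemma NRel.Cmid (H : NRel A Λ m e t) (r a j : ℕ) (h0 : r ≤ j) (h : j + 1 < r + a) :
    t j * CC t r a = CC t r a * t (j + 1) := by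
  induction a with
  | zero => omega
  | succ a ih =>
    by_cases hj : j + 1 < r + a
    · simp only [CC]
      rw [← mul_assoc, H.tt j (r + a) hj, mul_assoc, ih hj, mul_assoc]
    · obtain ⟨b, rfl⟩ : ∃ b, a = b + 1 := ⟨a - 1, by omega⟩
      obtain rfl : j = r + b := by omega
      simp only [CC]
      have h1 := H.braid (r + b)
      have h2 := H.Cfar r b (r + b + 1) le_rfl
      rw [show r + (b + 1) = r + b + 1 by omega, ← mul_assoc, ← mul_assoc, ← h1,
        mul_assoc (_ * _), h2]
      simp only [mul_assoc]

lemma NRel.Cbig (H : NRel A Λ m e t) (r a : ℕ) (ha : 0 < a) (h : m ≤ r + a) : CC t r a = 0 := by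
  obtain ⟨b, rfl⟩ : ∃ b, a = b + 1 := ⟨a - 1, by omega⟩
  simp only [CC]
  rw [H.t_len _ (by omega), zero_mul]

/-- A monomial is zero or moves an idempotent through. -/
lemma NRel.thru (H : NRel A Λ m e t) (r : ℕ) (l : List ℕ) (hl : ∀ j ∈ l, r ≤ j)
    (ν : List (Fin N)) :
    W t l * e ν = 0 ∨ ∃ ν', ν'.Perm ν ∧ ν'.take r = ν.take r ∧ W t l * e ν = e ν' * W t l := by
  induction l with
  | nil => right; exact ⟨ν, List.Perm.refl _, rfl, by simp [W]⟩
  | cons j l ih =>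
    rcases ih (fun i hi => hl i (by simp [hi])) with h | ⟨ν', h1, h2, h3⟩
    · left; rw [W_cons, mul_assoc, h, mul_zero]
    · by_cases hlen : ν'.length = m
      swap
      · left; rw [W_cons, mul_assoc, h3, H.e_len _ hlen]; simp
      by_cases hj : m ≤ j + 1
      · left; rw [W_cons, H.t_len _ hj]; simp
      obtain ⟨u, a, b, w, rfl, rfl⟩ := split2 ν' j (by omega)
      right
      refine ⟨u ++ b :: a :: w, (List.Perm.append_left u (List.Perm.swap a b w)).trans h1, ?_, ?_⟩
      · rw [← h2]
        have := hl u.length (by simp)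
        rw [List.take_append_of_le_length this, List.take_append_of_le_length this]
      · rw [W_cons, mul_assoc, h3, ← mul_assoc, H.te, mul_assoc]

lemma NRel.thru' (H : NRel A Λ m e t) (r : ℕ) (l : List ℕ) (hl : ∀ j ∈ l, r ≤ j)
    (ν : List (Fin N)) :
    W t l * e ν = 0 ∨ ∃ ν', ν'.Perm ν ∧ ν'.take r = ν.take r ∧
      W t l * e ν = e ν' * (W t l * e ν) := by
  rcases H.thru r l hl ν with h | ⟨ν', h1, h2, h3⟩
  · exact Or.inl h
  · exact Or.inr ⟨ν', h1, h2, by rw [h3, ← mul_assoc, H.e_idem]⟩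

lemma NRel.sq (H : NRel A Λ m e t) (j : ℕ) (ν : List (Fin N)) :
    t j * t j * e ν = 0 ∨ t j * t j * e ν = e ν := by
  by_cases hlen : ν.length = m
  swap
  · left; rw [H.e_len _ hlen, mul_zero]
  by_cases hj : m ≤ j + 1
  · left; rw [H.t_len _ hj]; simp
  obtain ⟨u, a, b, w, rfl, rfl⟩ := split2 ν j (by omega)
  by_cases h : A a b = 0
  · right; exact H.tsq u a b w h
  · left; rw [mul_assoc, H.tz u a b w h, mul_zero]

lemma CC_W (t : ℕ → R) (r a : ℕ) : ∃ l : List ℕ, CC t r a = W t l := by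
  induction a with
  | zero => exact ⟨[], by simp [CC, W]⟩
  | succ a ih =>
    obtain ⟨l, hl⟩ := ih
    exact ⟨(r + a) :: l, by rw [W_cons, ← hl]; rfl⟩

lemma W_append (l l' : List ℕ) : W t (l ++ l') = W t l * W t l' := by simp [W]

lemma NRel.coset (H : NRel A Λ m e t) (r : ℕ) (ν : List (Fin N)) (l : List ℕ)
    (hl : ∀ j ∈ l, r ≤ j) :
    W t l * e ν = 0 ∨ ∃ a l', (∀ j ∈ l', r + 1 ≤ j) ∧
      W t l * e ν = CC t r a * (W t l' * e ν) := by
  induction l with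
  | nil => right; exact ⟨0, [], by simp, by simp [CC, W]⟩
  | cons j l ih =>
    rcases ih (fun i hi => hl i (by simp [hi])) with h | ⟨a, l', h1, h2⟩
    · left; rw [W_cons, mul_assoc, h, mul_zero]
    have hj := hl j (by simp)
    rw [W_cons, mul_assoc, h2]
    rcases lt_trichotomy j (r + a) with h | h | h
    · by_cases hja : j + 1 < r + a
      · right
        refine ⟨a, (j + 1) :: l', ?_, ?_⟩
        · intro i hi
          rcases List.mem_cons.1 hi with rfl | hi
          · omega
          · exact h1 i hi
        · rw [W_cons, ← mul_assoc, H.Cmid r a j hj hja]; simp only [mul_assoc]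
      · obtain ⟨b, rfl⟩ : ∃ b, a = b + 1 := ⟨a - 1, by omega⟩
        obtain rfl : j = r + b := by omega
        obtain ⟨lc, hlc⟩ := CC_W t r b
        have hX : CC t r b * (W t l' * e ν) = W t (lc ++ l') * e ν := by
          rw [W_append, hlc, mul_assoc]
        have hgoal : t (r + b) * (CC t r (b + 1) * (W t l' * e ν)) =
            t (r + b) * t (r + b) * (CC t r b * (W t l' * e ν)) := by
          simp only [CC, mul_assoc]
        rw [hgoal]
        rcases H.thru' 0 (lc ++ l') (by simp) ν with h | ⟨ν', _, _, h⟩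
        · left; rw [hX, h, mul_zero]
        · rw [hX, h, ← mul_assoc]
          rcases H.sq (r + b) ν' with h' | h'
          · left; rw [h', zero_mul]
          · right; exact ⟨b, l', h1, by rw [h', ← h, ← hX]⟩
    · right
      refine ⟨a + 1, l', h1, ?_⟩
      rw [h]; simp only [CC, mul_assoc]
    · right
      refine ⟨a, j :: l', ?_, ?_⟩
      · intro i hi
        rcases List.mem_cons.1 hi with rfl | hi
        · omega
        · exact h1 i hi
      · rw [W_cons, ← mul_assoc, H.Cfar r a j (by omega)]; simp only [mul_assoc]

lemma NRel.CE (H : NRel A Λ m e t) (p : List (Fin N)) (i : Fin N) (q s : List (Fin N)) :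
    CC t p.length q.length * e (p ++ i :: (q ++ s)) =
      e (p ++ (q ++ i :: s)) * CC t p.length q.length := by
  induction q using List.reverseRecOn generalizing s with
  | nil => simp [CC]
  | append_singleton q c ih =>
    simp only [List.length_append, List.length_singleton, CC]
    have h1 := ih (c :: s)
    have h2 := H.te (p ++ q) i c s
    simp only [List.append_assoc, List.singleton_append, List.length_append] at h2 ⊢
    rw [mul_assoc, h1, ← mul_assoc, h2, mul_assoc]

lemma NRel.CZ (H : NRel A Λ m e t) (hd : ∀ i, A i i ≠ 0) (p : List (Fin N)) (i : Fin N)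
    (q s : List (Fin N)) (hi : i ∈ q) :
    CC t p.length q.length * e (p ++ i :: (q ++ s)) = 0 := by
  induction q using List.reverseRecOn generalizing s with
  | nil => simp at hi
  | append_singleton q c ih =>
    simp only [List.length_append, List.length_singleton, CC]
    have h1 := H.CE p i q (c :: s)
    simp only [List.append_assoc, List.singleton_append] at h1 ⊢
    by_cases hq : i ∈ q
    · have := ih (c :: s) hq
      rw [mul_assoc, this, mul_zero]
    · have hc : i = c := by simpa [hq] using hi
      subst hc
      have h2 := H.tz (p ++ q) i i s (hd i)
      simp only [List.append_assoc, List.length_append] at h2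
      rw [mul_assoc, h1, ← mul_assoc, h2, zero_mul]

lemma NRel.step (H : NRel A Λ m e t) (hd : ∀ i, A i i ≠ 0) (r : ℕ) (p : List (Fin N))
    (i : Fin N) (s0 : List (Fin N)) (hp : p.length = r) (μ : List (Fin N)) (l : List ℕ)
    (hl : ∀ j ∈ l, r ≤ j) :
    e μ * (W t l * e (p ++ i :: s0)) = 0 ∨ ∃ l', (∀ j ∈ l', r + 1 ≤ j) ∧
      e μ * (W t l * e (p ++ i :: s0)) = CC t r ((μ.drop r).idxOf i) *
        (e (μ.take r ++ i :: (μ.drop r).erase i) * (W t l' * e (p ++ i :: s0))) := by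
  subst hp
  rcases H.coset p.length (p ++ i :: s0) l hl with h | ⟨a, l', h1, h2⟩
  · left; rw [h, mul_zero]
  rcases H.thru' (p.length + 1) l' h1 (p ++ i :: s0) with h | ⟨ν', h3, h4, h5⟩
  · left; rw [h2, h]; simp
  obtain ⟨q, rfl⟩ : ∃ q, ν' = p ++ i :: q := by
    refine ⟨ν'.drop (p.length + 1), ?_⟩
    conv_lhs => rw [← List.take_append_drop (p.length + 1) ν', h4]
    simp [List.take_append]
  by_cases hlen : (p ++ i :: q).length = m
  swap
  · left; rw [h2, h5, H.e_len _ hlen]; simp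
  by_cases ha : q.length < a
  · left; rw [h2, H.Cbig _ _ (by omega) (by simp at hlen; omega)]; simp
  obtain ⟨q, s, rfl, rfl⟩ : ∃ q1 s, q = q1 ++ s ∧ q1.length = a :=
    ⟨q.take a, q.drop a, by simp, by simp; omega⟩
  by_cases hi : i ∈ q
  · left
    have := H.CZ hd p i q s hi
    rw [h2, h5, ← mul_assoc (CC _ _ _), this]; simp
  have hCE := H.CE p i q s
  by_cases hμ : μ = p ++ (q ++ i :: s)
  · subst hμ
    right
    refine ⟨l', h1, ?_⟩
    have e1 : (p ++ (q ++ i :: s)).drop p.length = q ++ i :: s := by simp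
    have e2 : (p ++ (q ++ i :: s)).take p.length = p := by simp
    have e3 : (q ++ i :: s).idxOf i = q.length := by
      rw [List.idxOf_append_of_notMem hi]; simp
    have e4 : (q ++ i :: s).erase i = q ++ s := by
      rw [List.erase_append_right _ hi]; simp
    rw [e1, e2, e3, e4, h2, ← mul_assoc, ← hCE, mul_assoc]
  · left
    rw [h2, h5, ← mul_assoc (CC _ _ _), hCE, ← mul_assoc, ← mul_assoc (e μ), H.e_orth _ _ hμ]
    simp

lemma NRel.one_dim (H : NRel A Λ m e t) (hd : ∀ i, A i i ≠ 0) (n : ℕ) :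
    ∀ r, m ≤ r + n → ∀ μ ν, ∃ b : R, ∀ l : List ℕ, (∀ j ∈ l, r ≤ j) →
      ∃ s : k, e μ * (W t l * e ν) = s • b := by
  induction n with
  | zero =>
    intro r hr μ ν
    refine ⟨e μ * e ν, fun l hl => ?_⟩
    cases l with
    | nil => exact ⟨1, by simp [W]⟩
    | cons j l =>
      refine ⟨0, ?_⟩
      have := hl j (by simp)
      rw [W_cons, H.t_len j (by omega)]
      simp
  | succ n ih =>
    intro r hr μ ν
    by_cases hν : ν.length = m
    swap
    · exact ⟨0, fun l _ => ⟨0, by rw [H.e_len _ hν]; simp⟩⟩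
    by_cases hrm : r < m
    swap
    · exact ih r (by omega) μ ν
    obtain ⟨p, i, s0, rfl, hp⟩ : ∃ p i s, ν = p ++ i :: s ∧ p.length = r := by
      refine ⟨ν.take r, ν[r]'(by omega), ν.drop (r + 1), ?_, by simp; omega⟩
      rw [← List.drop_eq_getElem_cons, List.take_append_drop]
    obtain ⟨b, hb⟩ := ih (r + 1) (by omega) (μ.take r ++ i :: (μ.drop r).erase i) (p ++ i :: s0)
    refine ⟨CC t r ((μ.drop r).idxOf i) * b, fun l hl => ?_⟩
    rcases H.step hd r p i s0 hp μ l hl with h | ⟨l', h1, h2⟩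
    · exact ⟨0, by rw [h, zero_smul]⟩
    · obtain ⟨s, hs⟩ := hb l' h1
      exact ⟨s, by rw [h2, hs, mul_smul_comm]⟩

instance : Finite (MPairs A Λ m) := by
  have h : Set.Finite {L : List (Fin N) | L.length = m} := List.finite_length_eq _ _
  have := h.to_subtype
  refine Finite.of_injective (β := {L : List (Fin N) | L.length = m} ×
    {L : List (Fin N) | L.length = m}) (fun p => (⟨p.1.1, p.2.1.2⟩, ⟨p.1.2, p.2.2.1.2⟩)) ?_
  intro p q hpq
  simp only [Prod.mk.injEq, Subtype.mk.injEq] at hpq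
  exact Subtype.ext (Prod.ext hpq.1 hpq.2)

end Upper

section UpperFin

variable (k : Type) [Field k] {N m : ℕ} {R : Type} [Ring R] [Algebra k R]
  {Q : Fin N → Fin N → MvPolynomial (Fin 2) k} {A : Fin N → Fin N → ℤ} {Λ : Fin N → ℤ}

lemma upper (hG : Good A Λ) (hQ : QForm k A Q) (φ : FA k N m →ₐ[k] R)
    (hs : Function.Surjective φ)
    (hφ : ∀ a b, CRel k Q (Set.univ : Set (Fin m → Fin N)) Λ a b → φ a = φ b) :
    Module.Finite k R ∧ Module.finrank k R ≤ Nat.card (MPairs A Λ m) := by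
  have HL := LRel_of k φ Q Λ hφ
  have hsum := eL_sum k φ Q Λ hφ
  have H := NRel_of hG hQ HL hsum
  have hd : ∀ i, A i i ≠ 0 := fun i => by rw [hG.diag]; decide
  set e := eL k φ
  set t := tL k φ
  set x := xL k φ
  have h1d : ∀ μ ν, ∃ b : R, ∀ l : List ℕ, ∃ s : k, e μ * (W t l * e ν) = s • b := by
    intro μ ν
    obtain ⟨b, hb⟩ := H.one_dim (k := k) hd m 0 (by omega) μ ν
    exact ⟨b, fun l => hb l (by simp)⟩
  choose b hb using h1d
  set B : MPairs A Λ m → R := fun p => b p.1.1 p.1.2 with hB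
  -- the span of all monomials
  set V : Submodule k R := Submodule.span k
    {r | ∃ μ l ν, r = e μ * (W t l * e ν)} with hV
  have hVtop : ∀ r : R, r ∈ V := by
    have hmem : ∀ μ l ν, e μ * (W t l * e ν) ∈ V := fun μ l ν =>
      Submodule.subset_span ⟨μ, l, ν, rfl⟩
    have hcl : ∀ y : R, (∀ μ l ν, y * (e μ * (W t l * e ν)) ∈ V) → ∀ v ∈ V, y * v ∈ V := by
      intro y hy v hv
      induction hv using Submodule.span_induction with
      | mem v hv => obtain ⟨μ, l, ν, rfl⟩ := hv; exact hy μ l ν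
      | zero => simp
      | add a b _ _ ha hb => rw [mul_add]; exact V.add_mem ha hb
      | smul c a _ ha => rw [mul_smul_comm]; exact V.smul_mem _ ha
    apply gen_top k φ hs V
    · rw [← hsum]
      apply V.sum_mem
      intro ν _
      have := hmem (List.ofFn ν) [] (List.ofFn ν)
      have h' : e (List.ofFn ν) * (W t [] * e (List.ofFn ν)) = e (List.ofFn ν) := by
        simp [W, H.e_idem]
      rw [h'] at this
      exact this
    · intro L v hv
      refine hcl (e L) (fun μ l ν => ?_) v hv
      rw [← mul_assoc]
      by_cases hL : L = μ
      · rw [hL, H.e_idem]; exact hmem _ _ _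
      · rw [H.e_orth _ _ hL, zero_mul]; exact V.zero_mem
    · intro p v hv
      refine hcl (x p) (fun μ l ν => ?_) v hv
      rw [← mul_assoc, HL.x_zero hG hQ, zero_mul]; exact V.zero_mem
    · intro p v hv
      refine hcl (t p) (fun μ l ν => ?_) v hv
      rw [← mul_assoc]
      by_cases hlen : μ.length = m
      swap
      · rw [H.e_len _ hlen]; simp
      by_cases hj : m ≤ p + 1
      · rw [H.t_len _ hj]; simp
      obtain ⟨u, a, b', w, rfl, rfl⟩ := split2 μ p (by omega)
      rw [H.te, mul_assoc, ← mul_assoc (t _), ← W_cons]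
      exact hmem _ _ _
  have hspan : ⊤ ≤ Submodule.span k (Set.range B) := by
    intro r _
    have hr := hVtop r
    have hle : V ≤ Submodule.span k (Set.range B) := by
      rw [hV, Submodule.span_le]
      rintro _ ⟨μ, l, ν, rfl⟩
      obtain ⟨s, hs'⟩ := hb μ ν l
      by_cases h0 : e μ * (W t l * e ν) = 0
      · rw [h0]; exact Submodule.zero_mem _
      have hμ : e μ ≠ 0 := fun h => h0 (by rw [h, zero_mul])
      have hν : e ν ≠ 0 := fun h => h0 (by rw [h]; simp)
      have hperm : μ.Perm ν := by
        rcases H.thru' 0 l (by simp) ν with h | ⟨ν', h1, _, h3⟩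
        · exact absurd (by rw [h, mul_zero]) h0
        · by_cases h : μ = ν'
          · rw [h]; exact h1
          · exact absurd (by rw [h3, ← mul_assoc, H.e_orth _ _ h, zero_mul]) h0
      have c1 : MPath A Λ μ := by by_contra h; exact hμ (H.e_path _ h)
      have c2 : MPath A Λ ν := by by_contra h; exact hν (H.e_path _ h)
      have c3 : μ.length = m := by by_contra h; exact hμ (H.e_len _ h)
      have c4 : ν.length = m := by by_contra h; exact hν (H.e_len _ h)
      rw [hs']
      exact Submodule.smul_mem _ _ (Submodule.subset_span
        ⟨⟨(μ, ν), ⟨c1, c3⟩, ⟨c2, c4⟩, hperm⟩, rfl⟩)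
    exact hle hr
  have hfin : Module.Finite k R := by
    refine ⟨⟨(Set.finite_range B).toFinset, ?_⟩⟩
    rw [Set.Finite.coe_toFinset]
    exact top_le_iff.1 hspan
  refine ⟨hfin, ?_⟩
  have : Fintype (MPairs A Λ m) := Fintype.ofFinite _
  rw [Nat.card_eq_fintype_card, ← finrank_top k R, ← top_le_iff.1 hspan]
  exact finrank_range_le_card B

end UpperFin


/-! ### Lower bound -/

section Lower

variable {N m : ℕ} {A : Fin N → Fin N → ℤ} {Λ : Fin N → ℤ}

lemma wt_perm {u v : List (Fin N)} (h : u.Perm v) : wt A Λ u = wt A Λ v := by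
  induction h with
  | nil => rfl
  | cons a _ ih => funext i; show wt A Λ _ i - _ = wt A Λ _ i - _; rw [ih]
  | swap a b l =>
    funext i
    show wt A Λ l i - A i a - A i b = wt A Λ l i - A i b - A i a
    ring
  | trans _ _ h1 h2 => rw [h1, h2]

lemma MPath_swap (hG : Good A Λ) (u : List (Fin N)) (i j : Fin N) (w : List (Fin N))
    (hij : A i j = 0) (h : MPath A Λ (u ++ i :: j :: w)) : MPath A Λ (u ++ j :: i :: w) := by
  induction u with
  | nil =>
    have h1 : wt A Λ w i - A i j = 1 := h.2
    have h2 : wt A Λ w j = 1 := h.1.2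
    refine ⟨⟨h.1.1, ?_⟩, ?_⟩
    · omega
    · show wt A Λ w j - A j i = 1
      have := hG.sym i j hij
      omega
  | cons c u ih =>
    refine ⟨ih h.1, ?_⟩
    show wt A Λ (u ++ j :: i :: w) c = 1
    rw [wt_perm (List.Perm.append_left u (List.Perm.swap i j w))]
    exact h.2

/-- A commutation move. -/
def Step (A : Fin N → Fin N → ℤ) (L L' : List (Fin N)) : Prop :=
  ∃ u i j w, A i j = 0 ∧ L = u ++ i :: j :: w ∧ L' = u ++ j :: i :: w

lemma Step.cons {L L' : List (Fin N)} (c : Fin N) (h : Step A L L') :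
    Step A (c :: L) (c :: L') := by
  obtain ⟨u, i, j, w, h, rfl, rfl⟩ := h
  exact ⟨c :: u, i, j, w, h, rfl, rfl⟩

lemma Steps_cons {L L' : List (Fin N)} (c : Fin N) (h : Relation.ReflTransGen (Step A) L L') :
    Relation.ReflTransGen (Step A) (c :: L) (c :: L') := by
  induction h with
  | refl => exact Relation.ReflTransGen.refl
  | tail _ h ih => exact ih.tail (h.cons c)

lemma Steps_path (hG : Good A Λ) {L L' : List (Fin N)}
    (h : Relation.ReflTransGen (Step A) L L') (hL : MPath A Λ L) : MPath A Λ L' := by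
  induction h with
  | refl => exact hL
  | tail _ h ih =>
    obtain ⟨u, i, j, w, h, rfl, rfl⟩ := h
    exact MPath_swap hG u i j w h ih

lemma Steps_perm {L L' : List (Fin N)}
    (h : Relation.ReflTransGen (Step A) L L') : L.Perm L' := by
  induction h with
  | refl => exact List.Perm.refl _
  | tail _ h ih =>
    obtain ⟨u, i, j, w, h, rfl, rfl⟩ := h
    exact ih.trans (List.Perm.append_left u (List.Perm.swap j i w))

lemma Steps_front (i : Fin N) (v r : List (Fin N)) (hv : ∀ c ∈ v, A c i = 0) :
    Relation.ReflTransGen (Step A) (v ++ i :: r) (i :: (v ++ r)) := by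
  induction v with
  | nil => exact Relation.ReflTransGen.refl
  | cons c v ih =>
    exact (Steps_cons c (ih (fun d hd => hv d (by simp [hd])))).tail
      ⟨[], c, i, v ++ r, hv c (by simp), rfl, rfl⟩

lemma Steps_conn (hG : Good A Λ) (μ : List (Fin N)) : ∀ ν, MPath A Λ μ → MPath A Λ ν →
    ν.Perm μ → Relation.ReflTransGen (Step A) ν μ := by
  induction μ with
  | nil => intro ν _ _ h; rw [List.Perm.eq_nil h]
  | cons i μ ih =>
    intro ν hμ hν h
    have h1 : wt A Λ ν i = -1 := by
      rw [wt_perm h]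
      show wt A Λ μ i - A i i = -1
      rw [hμ.2, hG.diag]; norm_num
    obtain ⟨v, r, rfl, hv⟩ := split_neg hG i ν hν h1
    have h2 := Steps_front (A := A) i v r (fun c hc => hG.sym _ _ (hv c hc))
    have h3 := Steps_path hG h2 hν
    have h4 : (v ++ r).Perm μ :=
      (List.perm_cons i).1 ((Steps_perm h2).symm.trans h)
    exact h2.trans (Steps_cons i (ih _ hμ.1 h3.1 h4))

lemma ofFn_seqOf (L : List (Fin N)) (h : L.length = m) : List.ofFn (seqOf L h) = L := by
  apply List.ext_getElem
  · simp [h]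
  · intro p _ _
    simp [seqOf]

lemma exists_seq (ν : Fin m → Fin N) : ∃ (L : List (Fin N)) (h : L.length = m), ν = seqOf L h :=
  ⟨List.ofFn ν, List.length_ofFn, (seqOf_ofFn ν).symm⟩

lemma swapSeq_val (j : ℕ) (h : j + 1 < m) (ν : Fin m → Fin N) (q : ℕ) (hq : q < m) :
    swapSeq j h ν ⟨q, hq⟩ = if q = j then ν ⟨j + 1, h⟩ else
      if q = j + 1 then ν ⟨j, by omega⟩ else ν ⟨q, hq⟩ := by
  simp only [swapSeq, posSwap, Function.comp]
  split_ifs with h1 h2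
  · subst h1; rw [Equiv.swap_apply_left]
  · subst h2; rw [Equiv.swap_apply_right]
  · rw [Equiv.swap_apply_of_ne_of_ne]
    · simpa using h1
    · simpa using h2

lemma swapSeq_swapSeq (j : ℕ) (h : j + 1 < m) (ν : Fin m → Fin N) :
    swapSeq j h (swapSeq j h ν) = ν := by
  funext q
  simp [swapSeq, posSwap]

/-- paths as sequences -/
def FP (A : Fin N → Fin N → ℤ) (Λ : Fin N → ℤ) (ν : Fin m → Fin N) : Prop :=
  MPath A Λ (List.ofFn ν)

lemma FP_swap (hG : Good A Λ) (j : ℕ) (h : j + 1 < m) (ν : Fin m → Fin N) (hν : FP A Λ ν)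
    (h0 : A (ν ⟨j, by omega⟩) (ν ⟨j + 1, h⟩) = 0) : FP A Λ (swapSeq j h ν) := by
  obtain ⟨L, hL, rfl⟩ := exists_seq ν
  obtain ⟨u, a, b, w, rfl, rfl⟩ := split2 L j (by omega)
  rw [seqOf_0 u a _ hL, seqOf_1 u a b w hL] at h0
  rw [FP, ofFn_seqOf] at hν
  rw [FP, seqOf_swap u a b w hL (by simpa using hL), ofFn_seqOf]
  exact MPath_swap hG u a b w h0 hν

lemma FP_ne (hG : Good A Λ) (j : ℕ) (h : j + 1 < m) (ν : Fin m → Fin N) (hν : FP A Λ ν) :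
    ν ⟨j, by omega⟩ ≠ ν ⟨j + 1, h⟩ := by
  obtain ⟨L, hL, rfl⟩ := exists_seq ν
  obtain ⟨u, a, b, w, rfl, rfl⟩ := split2 L j (by omega)
  rw [seqOf_0 u a _ hL, seqOf_1 u a b w hL]
  rw [FP, ofFn_seqOf] at hν
  rintro rfl
  exact MPath_nbr hG u a a w (by rw [hG.diag]; decide) hν hν

lemma FP_aba (hG : Good A Λ) (j : ℕ) (h : j + 2 < m) (ν : Fin m → Fin N) (hν : FP A Λ ν)
    (he : ν ⟨j, by omega⟩ = ν ⟨j + 2, h⟩) :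
    A (ν ⟨j, by omega⟩) (ν ⟨j + 1, by omega⟩) = -2 := by
  have hne := FP_ne hG j (by omega) ν hν
  obtain ⟨L, hL, rfl⟩ := exists_seq ν
  obtain ⟨u, a, b, c, w, rfl, rfl⟩ := split3 L j (by omega)
  rw [seqOf_0 u a _ hL, seqOf_2 u a b c w hL] at he
  subst he
  rw [seqOf_0 u a _ hL, seqOf_1 u a b _ hL] at hne ⊢
  rw [FP, ofFn_seqOf] at hν
  have h := MPath_suffix _ _ hν
  have h1 : wt A Λ w a = 1 := h.1.1.2
  have h2 : wt A Λ w a - A a a - A a b = 1 := h.2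
  have := hG.diag a
  omega

lemma FP_last (ν : Fin m → Fin N) (hν : FP A Λ ν) (p : Fin m) (hp : (p : ℕ) + 1 = m) :
    Λ (ν p) = 1 := by
  obtain ⟨L, hL, rfl⟩ := exists_seq ν
  obtain ⟨u, a, rfl⟩ : ∃ u a, L = u ++ [a] := by
    have : L ≠ [] := by rintro rfl; simp at hL; omega
    exact ⟨_, _, (List.dropLast_append_getLast this).symm⟩
  have hu : p = ⟨u.length, by simp at hL; omega⟩ := by
    apply Fin.ext
    simp at hL ⊢
    omega
  rw [hu, seqOf_0 u a [] hL]
  rw [FP, ofFn_seqOf] at hν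
  exact (MPath_suffix _ _ hν).2

variable (k : Type) [Field k]

/-- The module underlying the representation. -/
abbrev VV (A : Fin N → Fin N → ℤ) (Λ : Fin N → ℤ) (m : ℕ) : Type :=
  {ν : Fin m → Fin N // FP A Λ ν} →₀ k

/-- basis vectors -/
noncomputable def dl (A : Fin N → Fin N → ℤ) (Λ : Fin N → ℤ) (ν : Fin m → Fin N) : VV k A Λ m :=
  if h : FP A Λ ν then Finsupp.single ⟨ν, h⟩ 1 else 0

/-- idempotents act as projections -/
noncomputable def EE (A : Fin N → Fin N → ℤ) (Λ : Fin N → ℤ) (ν : Fin m → Fin N) :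
    Module.End k (VV k A Λ m) :=
  Finsupp.linearCombination k (fun p => if p.1 = ν then dl k A Λ p.1 else 0)

/-- action of the intertwiners -/
noncomputable def TT (A : Fin N → Fin N → ℤ) (Λ : Fin N → ℤ) (j : ℕ) (h : j + 1 < m) :
    Module.End k (VV k A Λ m) :=
  Finsupp.linearCombination k (fun p => if A (p.1 ⟨j, by omega⟩) (p.1 ⟨j + 1, h⟩) = 0
    then dl k A Λ (swapSeq j h p.1) else 0)

lemma EE_dl (μ ν : Fin m → Fin N) (hμ : FP A Λ μ) :
    EE k A Λ ν (dl k A Λ μ) = if μ = ν then dl k A Λ μ else 0 := by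
  conv_lhs => rw [dl, dif_pos hμ]
  rw [EE, Finsupp.linearCombination_single, one_smul]

lemma TT_dl (μ : Fin m → Fin N) (hμ : FP A Λ μ) (j : ℕ) (h : j + 1 < m) :
    TT k A Λ j h (dl k A Λ μ) = if A (μ ⟨j, by omega⟩) (μ ⟨j + 1, h⟩) = 0
      then dl k A Λ (swapSeq j h μ) else 0 := by
  conv_lhs => rw [dl, dif_pos hμ]
  rw [TT, Finsupp.linearCombination_single, one_smul]

lemma end_ext (f g : Module.End k (VV k A Λ m))
    (h : ∀ μ, FP A Λ μ → f (dl k A Λ μ) = g (dl k A Λ μ)) : f = g := by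
  apply Finsupp.lhom_ext'
  intro p
  apply LinearMap.ext_ring
  have := h p.1 p.2
  rw [dl, dif_pos p.2] at this
  exact this

/-- the representation on the free algebra -/
noncomputable def rep (A : Fin N → Fin N → ℤ) (Λ : Fin N → ℤ) (m : ℕ) :
    FA k N m →ₐ[k] Module.End k (VV k A Λ m) :=
  FreeAlgebra.lift k (fun g => match g with
    | Gen.e ν => EE k A Λ ν
    | Gen.x _ => 0
    | Gen.t j h => TT k A Λ j h)

lemma rep_e (ν : Fin m → Fin N) : rep k A Λ m (Eg k ν) = EE k A Λ ν := by
  simp [rep, Eg]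

lemma rep_x (p : Fin m) : rep k A Λ m (Xg k p) = 0 := by
  simp [rep, Xg]

lemma rep_t (j : ℕ) (h : j + 1 < m) : rep k A Λ m (Tg k j h) = TT k A Λ j h := by
  simp [rep, Tg]

/-- Checking an identity after multiplication by an idempotent. -/
lemma mulE_ext (f g : Module.End k (VV k A Λ m)) (ν : Fin m → Fin N)
    (h : FP A Λ ν → f (dl k A Λ ν) = g (dl k A Λ ν)) :
    f * EE k A Λ ν = g * EE k A Λ ν := by
  apply end_ext
  intro μ hμ
  rw [Module.End.mul_apply, Module.End.mul_apply, EE_dl k μ ν hμ]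
  split_ifs with h1
  · subst h1; exact h hμ
  · simp

lemma TT_pos (hG : Good A Λ) (μ : Fin m → Fin N) (hμ : FP A Λ μ) (j : ℕ) (h : j + 1 < m)
    (h0 : A (μ ⟨j, by omega⟩) (μ ⟨j + 1, h⟩) = 0) :
    TT k A Λ j h (dl k A Λ μ) = dl k A Λ (swapSeq j h μ) ∧ FP A Λ (swapSeq j h μ) :=
  ⟨by rw [TT_dl k μ hμ, if_pos h0], FP_swap hG j h μ hμ h0⟩

lemma TT_neg (μ : Fin m → Fin N) (hμ : FP A Λ μ) (j : ℕ) (h : j + 1 < m)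
    (h0 : A (μ ⟨j, by omega⟩) (μ ⟨j + 1, h⟩) ≠ 0) :
    TT k A Λ j h (dl k A Λ μ) = 0 := by rw [TT_dl k μ hμ, if_neg h0]

lemma swapSeq_comm (a : ℕ) (ha : a + 1 < m) (b : ℕ) (hb : b + 1 < m)
    (hab : a + 1 < b ∨ b + 1 < a) (μ : Fin m → Fin N) :
    swapSeq a ha (swapSeq b hb μ) = swapSeq b hb (swapSeq a ha μ) := by
  funext q
  obtain ⟨q, hq⟩ := q
  simp only [swapSeq_val]
  split_ifs <;> first | rfl | omega

lemma swapSeq_braid (j : ℕ) (h1 : j + 1 < m) (h2 : j + 1 + 1 < m) (μ : Fin m → Fin N) :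
    swapSeq (j + 1) h2 (swapSeq j h1 (swapSeq (j + 1) h2 μ)) =
      swapSeq j h1 (swapSeq (j + 1) h2 (swapSeq j h1 μ)) := by
  funext q
  obtain ⟨q, hq⟩ := q
  simp only [swapSeq_val]
  split_ifs <;> first | rfl | omega

lemma TT_comm (hG : Good A Λ) (a : ℕ) (ha : a + 1 < m) (b : ℕ) (hb : b + 1 < m)
    (hab : a + 1 < b ∨ b + 1 < a) :
    TT k A Λ a ha * TT k A Λ b hb = TT k A Λ b hb * TT k A Λ a ha := by
  apply end_ext
  intro μ hμ
  rw [Module.End.mul_apply, Module.End.mul_apply]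
  have v1 : swapSeq b hb μ ⟨a, by omega⟩ = μ ⟨a, by omega⟩ := by
    rw [swapSeq_val, if_neg (by omega), if_neg (by omega)]
  have v2 : swapSeq b hb μ ⟨a + 1, by omega⟩ = μ ⟨a + 1, by omega⟩ := by
    rw [swapSeq_val, if_neg (by omega), if_neg (by omega)]
  have v3 : swapSeq a ha μ ⟨b, by omega⟩ = μ ⟨b, by omega⟩ := by
    rw [swapSeq_val, if_neg (by omega), if_neg (by omega)]
  have v4 : swapSeq a ha μ ⟨b + 1, by omega⟩ = μ ⟨b + 1, by omega⟩ := by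
    rw [swapSeq_val, if_neg (by omega), if_neg (by omega)]
  by_cases h1 : A (μ ⟨a, by omega⟩) (μ ⟨a + 1, by omega⟩) = 0
  · obtain ⟨e1, p1⟩ := TT_pos k hG μ hμ a ha h1
    rw [e1]
    by_cases h2 : A (μ ⟨b, by omega⟩) (μ ⟨b + 1, by omega⟩) = 0
    · obtain ⟨e2, p2⟩ := TT_pos k hG μ hμ b hb h2
      rw [e2, (TT_pos k hG _ p1 b hb (by rw [v3, v4, h2])).1,
        (TT_pos k hG _ p2 a ha (by rw [v1, v2, h1])).1, swapSeq_comm a ha b hb hab]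
    · rw [TT_neg k μ hμ b hb h2, TT_neg k _ p1 b hb (by rw [v3, v4]; exact h2), map_zero]
  · rw [TT_neg k μ hμ a ha h1, map_zero]
    by_cases h2 : A (μ ⟨b, by omega⟩) (μ ⟨b + 1, by omega⟩) = 0
    · obtain ⟨e2, p2⟩ := TT_pos k hG μ hμ b hb h2
      rw [e2, TT_neg k _ p2 a ha (by rw [v1, v2]; exact h1)]
    · rw [TT_neg k μ hμ b hb h2, map_zero]

/-- the value of the length three words -/
lemma TT_121 (hG : Good A Λ) (j : ℕ) (h1 : j + 1 < m) (h2 : j + 1 + 1 < m) (μ : Fin m → Fin N)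
    (hμ : FP A Λ μ) :
    TT k A Λ (j + 1) h2 (TT k A Λ j h1 (TT k A Λ (j + 1) h2 (dl k A Λ μ))) =
      if A (μ ⟨j, by omega⟩) (μ ⟨j + 1, h1⟩) = 0 ∧ A (μ ⟨j, by omega⟩) (μ ⟨j + 2, h2⟩) = 0 ∧
        A (μ ⟨j + 1, h1⟩) (μ ⟨j + 2, h2⟩) = 0 then
        dl k A Λ (swapSeq (j + 1) h2 (swapSeq j h1 (swapSeq (j + 1) h2 μ))) else 0 := by
  have n1 : ¬ j = j + 1 + 1 := by omega
  have n2 : ¬ j + 1 + 1 = j := by omega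
  by_cases c1 : A (μ ⟨j + 1, h1⟩) (μ ⟨j + 2, h2⟩) = 0
  swap
  · rw [TT_neg k μ hμ _ h2 c1, if_neg (by tauto)]; simp
  obtain ⟨e1, p1⟩ := TT_pos k hG μ hμ _ h2 c1
  rw [e1]
  by_cases c2 : A (μ ⟨j, by omega⟩) (μ ⟨j + 2, h2⟩) = 0
  swap
  · rw [TT_neg k _ p1 _ h1 (by simpa [swapSeq_val, n1, n2] using c2), if_neg (by tauto)]; simp
  obtain ⟨e2, p2⟩ := TT_pos k hG _ p1 _ h1 (by simpa [swapSeq_val, n1, n2] using c2)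
  rw [e2, TT_dl k _ p2]
  simp [swapSeq_val, c1, c2, n1, n2]

lemma TT_010 (hG : Good A Λ) (j : ℕ) (h1 : j + 1 < m) (h2 : j + 1 + 1 < m) (μ : Fin m → Fin N)
    (hμ : FP A Λ μ) :
    TT k A Λ j h1 (TT k A Λ (j + 1) h2 (TT k A Λ j h1 (dl k A Λ μ))) =
      if A (μ ⟨j, by omega⟩) (μ ⟨j + 1, h1⟩) = 0 ∧ A (μ ⟨j, by omega⟩) (μ ⟨j + 2, h2⟩) = 0 ∧
        A (μ ⟨j + 1, h1⟩) (μ ⟨j + 2, h2⟩) = 0 then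
        dl k A Λ (swapSeq j h1 (swapSeq (j + 1) h2 (swapSeq j h1 μ))) else 0 := by
  have n1 : ¬ j = j + 1 + 1 := by omega
  have n2 : ¬ j + 1 + 1 = j := by omega
  by_cases c1 : A (μ ⟨j, by omega⟩) (μ ⟨j + 1, h1⟩) = 0
  swap
  · rw [TT_neg k μ hμ _ h1 c1, if_neg (by tauto)]; simp
  obtain ⟨e1, p1⟩ := TT_pos k hG μ hμ _ h1 c1
  rw [e1]
  by_cases c2 : A (μ ⟨j, by omega⟩) (μ ⟨j + 2, h2⟩) = 0
  swap
  · rw [TT_neg k _ p1 _ h2 (by simpa [swapSeq_val, n1, n2] using c2), if_neg (by tauto)]; simp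
  obtain ⟨e2, p2⟩ := TT_pos k hG _ p1 _ h2 (by simpa [swapSeq_val, n1, n2] using c2)
  rw [e2, TT_dl k _ p2]
  simp [swapSeq_val, c1, c2, n1, n2]

lemma TT_braid (hG : Good A Λ) (j : ℕ) (h1 : j + 1 < m) (h2 : j + 1 + 1 < m) (μ : Fin m → Fin N)
    (hμ : FP A Λ μ) :
    (TT k A Λ (j + 1) h2 * TT k A Λ j h1 * TT k A Λ (j + 1) h2) (dl k A Λ μ) =
    (TT k A Λ j h1 * TT k A Λ (j + 1) h2 * TT k A Λ j h1) (dl k A Λ μ) := by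
  simp only [Module.End.mul_apply]
  rw [TT_121 k hG j h1 h2 μ hμ, TT_010 k hG j h1 h2 μ hμ, swapSeq_braid]

lemma rep_eval2 {M : Fin N → Fin N → ℤ} {Q : Fin N → Fin N → MvPolynomial (Fin 2) k}
    (hQ : QForm k M Q) (hoff : ∀ i j, i ≠ j → M i j ≤ 0) (i j : Fin N) (h : i ≠ j)
    (p q : Fin m) :
    rep k A Λ m (eval2 k (Q i j) (Xg k p) (Xg k q)) = if M i j = 0 then 1 else 0 := by
  split_ifs with h0
  · rw [hQ.orth i j h h0, eval2_one, map_one]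
  · obtain ⟨c, d, b, _, hb, hq⟩ := hQ.nbr i j h h0
    have := hoff i j h
    rw [hq, eval2_Q2]
    simp only [map_add, map_mul, map_pow, rep_x]
    rw [zero_pow (by omega), zero_pow (by omega)]
    simp

theorem rep_rel (hG : Good A Λ) {Q : Fin N → Fin N → MvPolynomial (Fin 2) k}
    (hQ : QForm k A Q) (a b : FA k N m)
    (h : CRel k Q (Set.univ : Set (Fin m → Fin N)) Λ a b) :
    rep k A Λ m a = rep k A Λ m b := by
  rcases h with h | h
  · cases h with
    | e_orth ν ν' hne =>
      simp only [map_mul, rep_e, map_zero]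
      apply end_ext
      intro μ hμ
      rw [Module.End.mul_apply, EE_dl k _ _ hμ]
      split_ifs with h1
      · rw [EE_dl k _ _ hμ, if_neg (by rw [h1]; exact hne.symm)]; simp
      · simp
    | e_idem ν =>
      simp only [map_mul, rep_e]
      conv_rhs => rw [← one_mul (EE k A Λ ν)]
      apply mulE_ext
      intro hν
      rw [EE_dl k _ _ hν, if_pos rfl]; simp
    | e_sum =>
      simp only [map_sum, rep_e, map_one]
      apply end_ext
      intro μ hμ
      rw [LinearMap.sum_apply, Finset.sum_congr rfl (fun ν _ => EE_dl k μ ν hμ)]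
      simp
    | e_out ν hν => exact absurd (Set.mem_univ _) hν
    | xx p q => simp [rep_x]
    | xe p ν => simp [rep_x]
    | te j h ν =>
      simp only [map_mul, rep_e, rep_t]
      apply end_ext
      intro μ hμ
      rw [Module.End.mul_apply, Module.End.mul_apply, EE_dl k _ _ hμ]
      by_cases h0 : A (μ ⟨j, by omega⟩) (μ ⟨j + 1, h⟩) = 0
      · obtain ⟨e1, p1⟩ := TT_pos k hG μ hμ j h h0
        rw [e1, EE_dl k _ _ p1]
        by_cases hμν : μ = ν
        · subst hμν; rw [if_pos rfl, if_pos rfl, e1]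
        · rw [if_neg hμν, if_neg, map_zero]
          intro hc
          apply hμν
          rw [← swapSeq_swapSeq j h μ, hc, swapSeq_swapSeq]
      · rw [TT_neg k μ hμ j h h0]
        split_ifs
        · rw [TT_neg k μ hμ j h h0, map_zero]
        · simp
    | tt a ha b hb hab =>
      simp only [map_mul, rep_t]
      exact TT_comm k hG a ha b hb hab
    | tsq j h ν =>
      simp only [map_mul, rep_e, rep_t]
      apply mulE_ext
      intro hν
      rw [rep_eval2 k hQ (fun i j hij => by rcases hG.off i j hij with h | h | h <;> omega)
        _ _ (FP_ne hG j h ν hν), Module.End.mul_apply]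
      by_cases h0 : A (ν ⟨j, by omega⟩) (ν ⟨j + 1, h⟩) = 0
      · obtain ⟨e1, p1⟩ := TT_pos k hG ν hν j h h0
        rw [if_pos h0, e1, (TT_pos k hG _ p1 j h _).1, swapSeq_swapSeq]
        · simp
        · simpa [swapSeq_val] using hG.sym _ _ h0
      · rw [if_neg h0, TT_neg k ν hν j h h0]; simp
    | tx_left j h ν hv =>
      simp only [map_mul, map_sub, rep_e, rep_t, rep_x, mul_zero, zero_mul, zero_sub]
      have := mulE_ext k (A := A) (Λ := Λ) 1 0 ν (fun hν => absurd hv (FP_ne hG j h ν hν))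
      rw [one_mul, zero_mul] at this
      simp [this]
    | tx_right j h ν hv =>
      simp only [map_mul, map_add, rep_e, rep_t, rep_x, mul_zero, zero_mul, zero_add]
      have := mulE_ext k (A := A) (Λ := Λ) 1 0 ν (fun hν => absurd hv (FP_ne hG j h ν hν))
      rw [one_mul, zero_mul] at this
      rw [this]
    | tx_comm j h ν p hc => simp [rep_x]
    | braid_ne j h1 h2 ν hv =>
      simp only [map_mul, rep_e, rep_t]
      apply mulE_ext
      intro hν
      exact TT_braid k hG j h1 h2 ν hν
    | braid_eq j h1 h2 ν hv =>
      simp only [map_mul, map_add, rep_e, rep_t, rep_x]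
      rw [← add_mul]
      apply mulE_ext
      intro hν
      have h22 := FP_aba hG j h2 ν hν hv
      obtain ⟨c, d, b, _, _, hq⟩ := hQ.nbr _ _ (FP_ne hG j h1 ν hν) (by rw [h22]; decide)
      rw [h22] at hq
      have hq' : Q (ν ⟨j, by omega⟩) (ν ⟨j + 1, h1⟩) = Q2 k 2 b c d := hq
      rw [hq', eval3_two]
      simp only [map_add, map_mul, rep_x, mul_zero, add_zero]
      exact TT_braid k hG j h1 h2 ν hν
  · cases h with
    | cyc ν hν p hp =>
      simp only [map_mul, map_pow, rep_x, rep_e, map_zero]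
      rw [← zero_mul (EE k A Λ ν)]
      apply mulE_ext
      intro hν
      rw [FP_last ν hν p hp]
      simp

lemma reach (hG : Good A Λ) {L L' : List (Fin N)}
    (h : Relation.ReflTransGen (Step A) L L') (hL : MPath A Λ L) (hm : L.length = m)
    (hm' : L'.length = m) :
    ∃ a : FA k N m, rep k A Λ m a (dl k A Λ (seqOf L hm)) = dl k A Λ (seqOf L' hm') := by
  induction h with
  | refl => exact ⟨1, by simp⟩
  | @tail L1 L2 h1 h2 ih =>
    have hm1 : L1.length = m := by rw [← (Steps_perm h1).length_eq, hm]
    obtain ⟨a, ha⟩ := ih hm1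
    have hp1 := Steps_path hG h1 hL
    obtain ⟨u, i, j, w, h0, rfl, rfl⟩ := h2
    have hl : u.length + 1 < m := by simp at hm1; omega
    refine ⟨Tg k u.length hl * a, ?_⟩
    rw [map_mul, Module.End.mul_apply, ha, rep_t, (TT_pos k hG _ _ _ hl _).1,
      seqOf_swap u i j w hm1 hm' hl]
    · rw [FP, ofFn_seqOf]; exact hp1
    · rw [seqOf_0 u i _ hm1, seqOf_1 u i j w hm1]; exact h0

lemma dl_apply (ν μ : Fin m → Fin N) (hμ : FP A Λ μ) :
    dl k A Λ ν ⟨μ, hμ⟩ = if ν = μ then 1 else 0 := by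
  by_cases h : ν = μ
  · subst h
    rw [dl, dif_pos hμ, if_pos rfl, Finsupp.single_eq_same]
  · rw [if_neg h, dl]
    split_ifs with h1
    · rw [Finsupp.single_eq_of_ne]
      intro hc
      exact h (congrArg Subtype.val hc).symm
    · rfl

lemma card_le_of {ι : Type} [Fintype ι] {B : Type} [Ring B] [Algebra k B] [Module.Finite k B]
    (f : ι → B) (χ : ι → B →ₗ[k] k) (h : ∀ p q, χ q (f p) = if p = q then 1 else 0) :
    Fintype.card ι ≤ Module.finrank k B := by
  have hl : LinearIndependent k f := by
    rw [Fintype.linearIndependent_iff]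
    intro g hg q
    have h1 := congrArg (χ q) hg
    simpa [h] using h1
  exact hl.fintype_card_le_finrank

/-- matrix coefficients -/
noncomputable def coef {B : Type} [Ring B] [Algebra k B]
    (ψ : B →ₐ[k] Module.End k (VV k A Λ m)) (v : VV k A Λ m)
    (c : {ν : Fin m → Fin N // FP A Λ ν}) : B →ₗ[k] k where
  toFun b := ψ b v c
  map_add' x y := by rw [map_add, LinearMap.add_apply, Finsupp.add_apply]
  map_smul' r x := by
    rw [map_smul, LinearMap.smul_apply, Finsupp.smul_apply, RingHom.id_apply]

theorem lower (hG : Good A Λ) {Q : Fin N → Fin N → MvPolynomial (Fin 2) k}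
    (hQ : QForm k A Q)
    [Module.Finite k (RingQuot (CRel k Q (Set.univ : Set (Fin m → Fin N)) Λ))] :
    Nat.card (MPairs A Λ m) ≤
      Module.finrank k (RingQuot (CRel k Q (Set.univ : Set (Fin m → Fin N)) Λ)) := by
  have : Fintype (MPairs A Λ m) := Fintype.ofFinite _
  rw [Nat.card_eq_fintype_card]
  set ψ := RingQuot.liftAlgHom k (s := CRel k Q (Set.univ : Set (Fin m → Fin N)) Λ)
    ⟨rep k A Λ m, fun {a b} h => rep_rel k hG hQ a b h⟩ with hψ
  have hex : ∀ p : MPairs A Λ m, ∃ a : FA k N m,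
      rep k A Λ m a (dl k A Λ (seqOf p.1.2 p.2.2.1.2)) = dl k A Λ (seqOf p.1.1 p.2.1.2) :=
    fun p => reach k hG (Steps_conn hG p.1.1 p.1.2 p.2.1.1 p.2.2.1.1 p.2.2.2.symm)
      p.2.2.1.1 _ _
  choose a ha using hex
  set f : MPairs A Λ m → RingQuot (CRel k Q (Set.univ : Set (Fin m → Fin N)) Λ) := fun p =>
    RingQuot.mkAlgHom k _ (a p * Eg k (seqOf p.1.2 p.2.2.1.2)) with hf
  have hψf : ∀ p : MPairs A Λ m, ∀ μ : Fin m → Fin N, FP A Λ μ →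
      ψ (f p) (dl k A Λ μ) = if μ = seqOf p.1.2 p.2.2.1.2 then
        dl k A Λ (seqOf p.1.1 p.2.1.2) else 0 := by
    intro p μ hμ
    rw [hf, hψ, RingQuot.liftAlgHom_mkAlgHom_apply, map_mul, Module.End.mul_apply, rep_e,
      EE_dl k _ _ hμ]
    split_ifs with h
    · rw [h, ha]
    · simp
  have hF2 : ∀ q : MPairs A Λ m, FP A Λ (seqOf q.1.2 q.2.2.1.2) := by
    intro q
    rw [FP, ofFn_seqOf]; exact q.2.2.1.1
  have hF1 : ∀ q : MPairs A Λ m, FP A Λ (seqOf q.1.1 q.2.1.2) := by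
    intro q
    rw [FP, ofFn_seqOf]; exact q.2.1.1
  refine card_le_of k f (fun q => coef k ψ (dl k A Λ (seqOf q.1.2 q.2.2.1.2)) ⟨_, hF1 q⟩) ?_
  intro p q
  show ψ (f p) (dl k A Λ (seqOf q.1.2 q.2.2.1.2)) ⟨_, hF1 q⟩ = _
  rw [hψf p _ (hF2 q)]
  by_cases hpq : p = q
  · subst hpq
    rw [if_pos rfl, if_pos rfl, dl_apply, if_pos rfl]
  · rw [if_neg hpq]
    split_ifs with h2
    · rw [dl_apply, if_neg]
      intro h3
      apply hpq
      apply Subtype.ext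
      apply Prod.ext
      · rw [← ofFn_seqOf p.1.1 p.2.1.2, h3, ofFn_seqOf]
      · rw [← ofFn_seqOf p.1.2 p.2.2.1.2, ← h2, ofFn_seqOf]
    · rfl

theorem dim_eq (hG : Good A Λ) {Q : Fin N → Fin N → MvPolynomial (Fin 2) k}
    (hQ : QForm k A Q) (m : ℕ) :
    Module.finrank k (RingQuot (CRel k Q (Set.univ : Set (Fin m → Fin N)) Λ)) =
      Nat.card (MPairs A Λ m) := by
  obtain ⟨h1, h2⟩ := upper k hG hQ
    (RingQuot.mkAlgHom k (CRel k Q (Set.univ : Set (Fin m → Fin N)) Λ))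
    (RingQuot.mkAlgHom_surjective k _) (fun a b h => RingQuot.mkAlgHom_rel k h)
  exact le_antisymm h2 (lower k hG hQ)

end Lower


theorem cyclotomic_QHA_dim_B_D
    (k : Type) [Field k] (n : ℕ) (hn : 2 ≤ n) (m : ℕ)
    (QB : Fin n → Fin n → MvPolynomial (Fin 2) k)
    (hQB : QAdmissible k (AB n) (dB n) QB)
    (QD : Fin (n + 1) → Fin (n + 1) → MvPolynomial (Fin 2) k)
    (hQD : QAdmissible k (AD (n + 1)) (fun _ => 1) QD) :
    Module.finrank k (RingQuot (CRel k QB (Set.univ : Set (Fin m → Fin n))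
        (Pi.single ⟨0, by omega⟩ 1))) = Nat.card (TabPairs n m) ∧
    Module.finrank k (RingQuot (CRel k QD (Set.univ : Set (Fin m → Fin (n + 1)))
        (Pi.single ⟨0, by omega⟩ 1))) = Nat.card (TabPairs n m) ∧
    Module.finrank k (RingQuot (CRel k QD (Set.univ : Set (Fin m → Fin (n + 1)))
        (Pi.single ⟨1, by omega⟩ 1))) = Nat.card (TabPairs n m) := by
  have hS0 : Spin (n := n) 0 (Pi.single ⟨0, by omega⟩ 1) :=
    { ha := Or.inl rfl
      h0 := by
        intro i hi
        rw [show i = ⟨0, by omega⟩ from Fin.ext hi]; simp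
      h1 := by
        intro i hi
        rw [Pi.single_eq_of_ne]
        intro h; rw [h] at hi; simp at hi
      h2 := by
        intro i hi
        rw [Pi.single_eq_of_ne]
        intro h; rw [h] at hi; simp at hi }
  have hS1 : Spin (n := n) 1 (Pi.single ⟨1, by omega⟩ 1) :=
    { ha := Or.inr rfl
      h0 := by
        intro i hi
        rw [Pi.single_eq_of_ne]
        · simp
        intro h; rw [h] at hi; simp at hi
      h1 := by
        intro i hi
        rw [show i = ⟨1, by omega⟩ from Fin.ext hi]; simp
      h2 := by
        intro i hi
        rw [Pi.single_eq_of_ne]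
        intro h; rw [h] at hi; simp at hi }
  refine ⟨?_, ?_, ?_⟩
  · rw [dim_eq k (goodB hn) (QFormB k QB hQB) m]; exact cardB hn m
  · rw [dim_eq k (goodD hn hS0) (QFormD k QD hQD) m]; exact cardD hn m hS0
  · rw [dim_eq k (goodD hn hS1) (QFormD k QD hQD) m]; exact cardD hn m hS1

end QHA
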